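/- arXiv:2509.16047 — 2 statements merged into one kernel-verified Lean document; each statement's English description precedes it below -/
import Mathlib

section
/- Let k, n be integers with 1 ≤ k and n > 2k, let U(x) = (1 + |x|²)^{−(n−2k)/2} on ℝⁿ, and set S_{n,k} = [ ∏_{ℓ=1}^{k} ((n+2ℓ−2)(n−2ℓ)/4) ] · ( 2π^{(n+1)/2} / Γ((n+1)/2) )^{2k/n}. Then the integrals ∫_{ℝⁿ} U·(−Δ)^k U dx and ∫_{ℝⁿ} U^{2n/(n−2k)} dx are finite and positive, and equality holds in the sharp Sobolev inequality: ∫_{ℝⁿ} U(x)·((−Δ)^k U)(x) dx = S_{n,k} · ( ∫_{ℝⁿ} U(x)^{2n/(n−2k)} dx )^{(n−2k)/n}. -/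
open scoped Real

/-- The Euclidean Laplacian `Δu = ∑ i, ∂²u/∂xᵢ²` of a function on `ℝⁿ`. -/
noncomputable def lap {n : ℕ} (f : EuclideanSpace ℝ (Fin n) → ℝ)
    (x : EuclideanSpace ℝ (Fin n)) : ℝ :=
  ∑ i, fderiv ℝ (fun y => fderiv ℝ f y (EuclideanSpace.single i 1)) x
    (EuclideanSpace.single i 1)

/-- The standard bubble `U(x) = (1+|x|²)^{-(n-2k)/2}`. -/
noncomputable def bubble (n k : ℕ) (x : EuclideanSpace ℝ (Fin n)) : ℝ :=
  (1 + ‖x‖ ^ 2) ^ (-(((n : ℝ) - 2 * k) / 2))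

open scoped ContDiff

/-- The power `(1+|x|²)^{-a}`. -/
noncomputable def bubPow (n : ℕ) (a : ℝ) (x : EuclideanSpace ℝ (Fin n)) : ℝ :=
  (1 + ‖x‖ ^ 2) ^ (-a)

lemma bubPow_base_pos {n : ℕ} (x : EuclideanSpace ℝ (Fin n)) : 0 < 1 + ‖x‖ ^ 2 := by positivity

lemma bubPow_contDiff (n : ℕ) (a : ℝ) : ContDiff ℝ ∞ (bubPow n a) := by
  unfold bubPow
  refine ContDiff.rpow_const_of_ne ?_ (fun x => (bubPow_base_pos x).ne')
  exact contDiff_const.add (contDiff_norm_sq ℝ)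

lemma bubPow_hasFDerivAt (n : ℕ) (a : ℝ) (x : EuclideanSpace ℝ (Fin n)) :
    HasFDerivAt (bubPow n a) ((-2 * a * bubPow n (a + 1) x) • innerSL ℝ x) x := by
  have h1 : HasFDerivAt (fun y : EuclideanSpace ℝ (Fin n) => 1 + ‖y‖ ^ 2)
      (2 • (innerSL ℝ x)) x := by
    simpa using ((hasFDerivAt_id x).norm_sq).const_add 1
  have h2 := h1.rpow_const (p := -a) (Or.inl (bubPow_base_pos x).ne')
  refine h2.congr_fderiv ?_
  ext v
  have : -a - 1 = -(a + 1) := by ring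
  simp [bubPow, this]
  ring

lemma bubPow_fderiv_single (n : ℕ) (a : ℝ) (x : EuclideanSpace ℝ (Fin n)) (i : Fin n) :
    fderiv ℝ (bubPow n a) x (EuclideanSpace.single i 1)
      = (-2 * a) * (bubPow n (a + 1) x * x i) := by
  rw [(bubPow_hasFDerivAt n a x).fderiv]
  simp [EuclideanSpace.inner_single_right]
  ring

lemma lap_bubPow (n : ℕ) (a : ℝ) (x : EuclideanSpace ℝ (Fin n)) :
    lap (bubPow n a) x = 2 * a * (2 * a + 2 - n) * bubPow n (a + 1) x
      - 4 * a * (a + 1) * bubPow n (a + 2) x := by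
  unfold lap
  have key : ∀ i : Fin n, fderiv ℝ (fun y => fderiv ℝ (bubPow n a) y (EuclideanSpace.single i 1)) x
      (EuclideanSpace.single i 1) = 4 * a * (a + 1) * bubPow n (a + 2) x * (x i) ^ 2
        - 2 * a * bubPow n (a + 1) x := by
    intro i
    simp only [bubPow_fderiv_single]
    have hp : HasFDerivAt (fun y : EuclideanSpace ℝ (Fin n) => y i)
        (EuclideanSpace.proj i : EuclideanSpace ℝ (Fin n) →L[ℝ] ℝ) x :=
      (EuclideanSpace.proj i : EuclideanSpace ℝ (Fin n) →L[ℝ] ℝ).hasFDerivAt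
    have h := ((bubPow_hasFDerivAt n (a + 1) x).mul hp).const_mul (-2 * a)
    have h' : fderiv ℝ (fun y : EuclideanSpace ℝ (Fin n) =>
      (-2 * a) * (bubPow n (a + 1) y * y i)) x = _ := h.fderiv
    rw [h']
    have : a + 1 + 1 = a + 2 := by ring
    simp [EuclideanSpace.inner_single_right, this]
    ring
  simp only [key]
  rw [Finset.sum_sub_distrib, ← Finset.mul_sum]
  have hx : ∑ i, (x i) ^ 2 = ‖x‖ ^ 2 := (EuclideanSpace.real_norm_sq_eq x).symm
  have hs : bubPow n (a + 1) x = (1 + ‖x‖ ^ 2) * bubPow n (a + 2) x := by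
    unfold bubPow
    rw [show -(a + 1) = 1 + -(a + 2) by ring, Real.rpow_add (bubPow_base_pos x), Real.rpow_one]
  rw [hx]
  simp only [Finset.sum_const, Finset.card_univ, Fintype.card_fin, nsmul_eq_mul]
  rw [hs]
  ring

lemma lap_contDiff {n : ℕ} {f : EuclideanSpace ℝ (Fin n) → ℝ} (hf : ContDiff ℝ ∞ f) :
    ContDiff ℝ ∞ (lap f) := by
  unfold lap
  refine ContDiff.sum fun i _ => ?_
  have h1 : ContDiff ℝ ∞ (fun y => fderiv ℝ f y (EuclideanSpace.single i 1)) :=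
    (hf.fderiv_right (m := ∞) (by simp)).clm_apply contDiff_const
  exact (h1.fderiv_right (m := ∞) (by simp)).clm_apply contDiff_const

lemma lap_lin {n : ℕ} {f g : EuclideanSpace ℝ (Fin n) → ℝ} (hf : ContDiff ℝ ∞ f)
    (hg : ContDiff ℝ ∞ g) (c d : ℝ) :
    lap (fun x => c * f x + d * g x) = fun x => c * lap f x + d * lap g x := by
  funext x
  unfold lap
  have hd : ∀ {h : EuclideanSpace ℝ (Fin n) → ℝ}, ContDiff ℝ ∞ h → Differentiable ℝ h :=
    fun h => h.differentiable (by simp)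
  have lin : ∀ {f g : EuclideanSpace ℝ (Fin n) → ℝ}, ContDiff ℝ ∞ f → ContDiff ℝ ∞ g →
      ∀ y v, fderiv ℝ (fun x => c * f x + d * g x) y v
        = c * fderiv ℝ f y v + d * fderiv ℝ g y v := by
    intro f g hf hg y v
    have h : HasFDerivAt (fun x => c * f x + d * g x) _ y :=
      ((hd hf y).hasFDerivAt.const_mul c).add ((hd hg y).hasFDerivAt.const_mul d)
    rw [h.fderiv]
    simp
  have hsm : ∀ {h : EuclideanSpace ℝ (Fin n) → ℝ}, ContDiff ℝ ∞ h → ∀ v,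
      ContDiff ℝ ∞ (fun y => fderiv ℝ h y v) := fun h v =>
    (h.fderiv_right (m := ∞) (by simp)).clm_apply contDiff_const
  simp only [lin hf hg]
  rw [Finset.mul_sum, Finset.mul_sum, ← Finset.sum_add_distrib]
  refine Finset.sum_congr rfl fun i _ => ?_
  exact lin (hsm hf _) (hsm hg _) x _

lemma lap_iter_lin {n : ℕ} (j : ℕ) : ∀ {f g : EuclideanSpace ℝ (Fin n) → ℝ}, ContDiff ℝ ∞ f →
    ContDiff ℝ ∞ g → ∀ (c d : ℝ),
    lap^[j] (fun x => c * f x + d * g x) = fun x => c * lap^[j] f x + d * lap^[j] g x := by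
  induction j with
  | zero => intros; rfl
  | succ j ih =>
    intro f g hf hg c d
    simp only [Function.iterate_succ, Function.comp]
    rw [lap_lin hf hg, ih (lap_contDiff hf) (lap_contDiff hg)]

/-- The constant `∏ (n+2ℓ-2)(n-2ℓ)`. -/
noncomputable def bubC (n k : ℕ) : ℝ :=
  ∏ ℓ ∈ Finset.Icc 1 k, (((n : ℝ) + 2 * ℓ - 2) * ((n : ℝ) - 2 * ℓ))

lemma bubC_succ (n k : ℕ) :
    bubC n (k + 1) = bubC n k * (((n : ℝ) + 2 * k) * ((n : ℝ) - 2 * k - 2)) := by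
  unfold bubC
  rw [Finset.prod_Icc_succ_top (by omega)]
  push_cast
  ring

lemma lap_iter_bubPow (n k : ℕ) :
    (lap^[k] (bubPow n ((n : ℝ) / 2 - k)) = fun x => (-1) ^ k * bubC n k * bubPow n ((n : ℝ) / 2 + k) x)
    ∧ (lap^[k + 1] (bubPow n ((n : ℝ) / 2 - (k + 1 : ℕ)))
        = fun x => (-1) ^ (k + 1) * bubC n (k + 1) * bubPow n ((n : ℝ) / 2 + (k + 1 : ℕ)) x) := by
  induction k with
  | zero =>
    constructor
    · funext x; simp [bubC]
    · funext x
      simp only [zero_add, Function.iterate_one]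
      rw [lap_bubPow, bubC_succ, show (n : ℝ) / 2 - (1 : ℕ) + 2 = (n : ℝ) / 2 + (1 : ℕ) by
        push_cast; ring]
      simp [bubC]
      ring
  | succ k ih =>
    refine ⟨ih.2, ?_⟩
    obtain ⟨h0, h1⟩ := ih
    have e : lap (bubPow n ((n : ℝ) / 2 - (k + 1 + 1 : ℕ))) = fun x =>
        (2 * ((n : ℝ) / 2 - (k + 1 + 1 : ℕ)) * (2 * ((n : ℝ) / 2 - (k + 1 + 1 : ℕ)) + 2 - n))
          * bubPow n ((n : ℝ) / 2 - (k + 1 : ℕ)) x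
        + (- 4 * ((n : ℝ) / 2 - (k + 1 + 1 : ℕ)) * (((n : ℝ) / 2 - (k + 1 + 1 : ℕ)) + 1))
          * bubPow n ((n : ℝ) / 2 - k) x := by
      funext x
      rw [lap_bubPow]
      rw [show (n : ℝ) / 2 - (k + 1 + 1 : ℕ) + 1 = (n : ℝ) / 2 - (k + 1 : ℕ) by push_cast; ring,
        show (n : ℝ) / 2 - (k + 1 + 1 : ℕ) + 2 = (n : ℝ) / 2 - k by push_cast; ring]
      ring
    rw [Function.iterate_succ, Function.comp, e,
      lap_iter_lin (k + 1) (bubPow_contDiff _ _) (bubPow_contDiff _ _), h1]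
    rw [Function.iterate_succ', Function.comp, h0]
    have e2 := lap_lin (bubPow_contDiff n ((n : ℝ) / 2 + k)) (bubPow_contDiff n ((n : ℝ) / 2 + k))
      ((-1) ^ k * bubC n k) 0
    simp only [zero_mul, add_zero] at e2
    rw [e2]
    funext x
    simp only [lap_bubPow]
    rw [show (n : ℝ) / 2 + k + 1 = (n : ℝ) / 2 + (k + 1 : ℕ) by push_cast; ring,
      show (n : ℝ) / 2 + k + 2 = (n : ℝ) / 2 + (k + 1 + 1 : ℕ) by push_cast; ring,
      bubC_succ n (k + 1), bubC_succ n k]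
    push_cast
    ring

open MeasureTheory in
lemma bubPow_integral (n : ℕ) (hn : 0 < n) :
    Integrable (bubPow n n) ∧ Real.Gamma n * ∫ x, bubPow n n x
      = π ^ ((n : ℝ) / 2) * Real.Gamma ((n : ℝ) / 2) := by
  have hn' : (0 : ℝ) < n := by exact_mod_cast hn
  have hIntg : Integrable (bubPow n n) := by
    have := integrable_rpow_neg_one_add_norm_sq
      (μ := (volume : Measure (EuclideanSpace ℝ (Fin n)))) (r := 2 * n) (by simp; linarith)
    refine this.congr (Filter.Eventually.of_forall fun x => ?_)
    simp only [bubPow]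
    congr 1
    ring
  refine ⟨hIntg, ?_⟩
  let F : EuclideanSpace ℝ (Fin n) → ℝ → ℝ :=
    fun x t => t ^ ((n : ℝ) - 1) * Real.exp (-((1 + ‖x‖ ^ 2) * t))
  have hx : ∀ x, ∫ t in Set.Ioi 0, F x t = Real.Gamma n * bubPow n n x := by
    intro x
    simp only [F]
    rw [Real.integral_rpow_mul_exp_neg_mul_Ioi hn' (bubPow_base_pos x), bubPow,
      Real.rpow_neg (bubPow_base_pos x).le, one_div, Real.inv_rpow (bubPow_base_pos x).le, mul_comm]
  have hprod : Integrable (Function.uncurry F)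
      ((volume : Measure (EuclideanSpace ℝ (Fin n))).prod (volume.restrict (Set.Ioi 0))) := by
    rw [integrable_prod_iff]
    · constructor
      · refine Filter.Eventually.of_forall fun x => ?_
        have := integrableOn_rpow_mul_exp_neg_mul_rpow (p := 1) (s := (n : ℝ) - 1)
          (b := 1 + ‖x‖ ^ 2) (by linarith) one_pos (bubPow_base_pos x)
        simpa only [F, IntegrableOn, neg_mul, Function.uncurry, Real.rpow_one] using this
      · have : (fun x => ∫ t in Set.Ioi 0, ‖Function.uncurry F (x, t)‖)
            = fun x => Real.Gamma n * bubPow n n x := by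
          funext x
          rw [← hx]
          refine setIntegral_congr_fun measurableSet_Ioi fun t ht => ?_
          have ht' : (0 : ℝ) < t := ht
          simp only [Function.uncurry, F]
          exact Real.norm_of_nonneg (by positivity)
        rw [this]
        exact hIntg.const_mul _
    · apply Measurable.aestronglyMeasurable
      simp only [Function.uncurry_def, F]
      fun_prop
  have hswap := integral_integral_swap hprod
  simp only [hx] at hswap
  rw [integral_const_mul] at hswap
  rw [hswap]
  have : ∀ t ∈ Set.Ioi (0 : ℝ), ∫ x, F x t
      = π ^ ((n : ℝ) / 2) * (t ^ ((n : ℝ) / 2 - 1) * Real.exp (-(1 * t))) := by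
    intro t ht
    have ht' : (0 : ℝ) < t := ht
    have e : ∀ x, F x t = (t ^ ((n : ℝ) - 1) * Real.exp (-(1 * t))) * Real.exp (-t * ‖x‖ ^ 2) := by
      intro x
      simp only [F]
      rw [mul_assoc, ← Real.exp_add]
      congr 2
      ring
    simp only [e]
    rw [integral_const_mul, GaussianFourier.integral_rexp_neg_mul_sq_norm ht',
      Real.div_rpow Real.pi_pos.le ht'.le]
    rw [show (n : ℝ) - 1 = ((n : ℝ) / 2 - 1) + (n : ℝ) / 2 by ring, Real.rpow_add ht']
    simp only [finrank_euclideanSpace, Fintype.card_fin]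
    have : t ^ ((n : ℝ) / 2) ≠ 0 := (Real.rpow_pos_of_pos ht' _).ne'
    field_simp
  rw [setIntegral_congr_fun measurableSet_Ioi this, integral_const_mul,
    Real.integral_rpow_mul_exp_neg_mul_Ioi (by positivity) one_pos]
  simp

lemma bubPow_integral_eq (n : ℕ) (hn : 0 < n) :
    ∫ x, bubPow n n x
      = (2 * π ^ (((n : ℝ) + 1) / 2) / Real.Gamma (((n : ℝ) + 1) / 2)) / 2 ^ (n : ℝ) := by
  have hn' : (0 : ℝ) < n := by exact_mod_cast hn
  have h := (bubPow_integral n hn).2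
  have hd := Real.Gamma_mul_Gamma_add_half ((n : ℝ) / 2)
  rw [show 2 * ((n : ℝ) / 2) = n by ring, show (n : ℝ) / 2 + 1 / 2 = ((n : ℝ) + 1) / 2 by ring,
    Real.rpow_sub two_pos, Real.rpow_one, Real.sqrt_eq_rpow] at hd
  have g1 : Real.Gamma n ≠ 0 := (Real.Gamma_pos_of_pos hn').ne'
  have g2 : Real.Gamma (((n : ℝ) + 1) / 2) ≠ 0 := (Real.Gamma_pos_of_pos (by positivity)).ne'
  have p2 : (2 : ℝ) ^ (n : ℝ) ≠ 0 := (Real.rpow_pos_of_pos two_pos _).ne'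
  rw [show ((n : ℝ) + 1) / 2 = (n : ℝ) / 2 + 1 / 2 by ring, Real.rpow_add Real.pi_pos]
  rw [show (n : ℝ) / 2 + 1 / 2 = ((n : ℝ) + 1) / 2 by ring]
  generalize (∫ x, bubPow n n x) = I at *
  generalize (2 : ℝ) ^ (n : ℝ) = P at *
  generalize Real.Gamma (((n : ℝ) + 1) / 2) = G2 at *
  generalize Real.Gamma ((n : ℝ) / 2) = G3 at *
  generalize Real.Gamma (n : ℝ) = G1 at *
  rw [eq_div_iff p2, eq_div_iff g2]
  apply mul_left_cancel₀ g1
  have : G1 * (I * P * G2) = (G1 * I) * P * G2 := by ring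
  rw [this, h]
  have : π ^ ((n : ℝ) / 2) * G3 * P * G2 = π ^ ((n : ℝ) / 2) * P * (G3 * G2) := by ring
  rw [this, hd]
  field_simp

lemma bubC_pos (n k : ℕ) (hn : 2 * k < n) : 0 < bubC n k := by
  unfold bubC
  refine Finset.prod_pos fun l hl => ?_
  rw [Finset.mem_Icc] at hl
  have h1 : (1 : ℝ) ≤ l := by exact_mod_cast hl.1
  have h2 : (l : ℝ) ≤ k := by exact_mod_cast hl.2
  have h3 : (2 * k : ℝ) < n := by exact_mod_cast hn
  exact mul_pos (by linarith [Nat.cast_nonneg (α := ℝ) n]) (by linarith)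

/-- The standard bubble attains equality in the sharp Sobolev inequality for
`W^{k,2} ↪ L^{2n/(n-2k)}` on `ℝⁿ`: both integrals are finite and positive, and
`∫ U·(-Δ)ᵏU = S_{n,k} (∫ U^{2n/(n-2k)})^{(n-2k)/n}`. -/
theorem bubble_attains_sharp_sobolev
    (n k : ℕ) (hk : 1 ≤ k) (hn : 2 * k < n) :
    MeasureTheory.Integrable
        (fun x : EuclideanSpace ℝ (Fin n) =>
          bubble n k x * ((-1 : ℝ) ^ k * lap^[k] (bubble n k) x))
    ∧ (0 : ℝ) < ∫ x, bubble n k x * ((-1 : ℝ) ^ k * lap^[k] (bubble n k) x)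
    ∧ MeasureTheory.Integrable
        (fun x : EuclideanSpace ℝ (Fin n) =>
          bubble n k x ^ ((2 * n : ℝ) / ((n : ℝ) - 2 * k)))
    ∧ (0 : ℝ) < ∫ x, bubble n k x ^ ((2 * n : ℝ) / ((n : ℝ) - 2 * k))
    ∧ ∫ x, bubble n k x * ((-1 : ℝ) ^ k * lap^[k] (bubble n k) x)
        = ((∏ ℓ ∈ Finset.Icc 1 k,
              (((n : ℝ) + 2 * ℓ - 2) * ((n : ℝ) - 2 * ℓ) / 4))
            * (2 * π ^ (((n : ℝ) + 1) / 2) / Real.Gamma (((n : ℝ) + 1) / 2))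
                ^ ((2 * k : ℝ) / n))
          * (∫ x, bubble n k x ^ ((2 * n : ℝ) / ((n : ℝ) - 2 * k)))
              ^ (((n : ℝ) - 2 * k) / n) := by
  have hn0 : 0 < n := by omega
  have hn' : (0 : ℝ) < n := by exact_mod_cast hn0
  have hm : (0 : ℝ) < (n : ℝ) - 2 * k := by
    have : (2 * k : ℝ) < n := by exact_mod_cast hn
    linarith
  have hb : bubble n k = bubPow n ((n : ℝ) / 2 - k) := by
    funext x
    unfold bubble bubPow
    congr 1
    ring
  have h1 : (fun x => bubble n k x * ((-1 : ℝ) ^ k * lap^[k] (bubble n k) x))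
      = fun x => bubC n k * bubPow n n x := by
    rw [hb, (lap_iter_bubPow n k).1]
    funext x
    have e : bubPow n n x = bubPow n ((n : ℝ) / 2 - k) x * bubPow n ((n : ℝ) / 2 + k) x := by
      unfold bubPow
      rw [← Real.rpow_add (bubPow_base_pos x)]
      congr 1
      ring
    have s : (-1 : ℝ) ^ k * (-1) ^ k = 1 := by rw [← mul_pow]; simp
    rw [e]
    linear_combination (bubC n k * (bubPow n ((n : ℝ) / 2 - k) x
      * bubPow n ((n : ℝ) / 2 + k) x)) * s
  have h2 : (fun x => bubble n k x ^ ((2 * n : ℝ) / ((n : ℝ) - 2 * k))) = bubPow n n := by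
    funext x
    unfold bubble bubPow
    rw [← Real.rpow_mul (bubPow_base_pos x).le]
    congr 1
    field_simp
  have hIntg := (bubPow_integral n hn0).1
  have hI := bubPow_integral_eq n hn0
  have hω : 0 < 2 * π ^ (((n : ℝ) + 1) / 2) / Real.Gamma (((n : ℝ) + 1) / 2) := by
    have := Real.Gamma_pos_of_pos (show 0 < ((n : ℝ) + 1) / 2 by positivity)
    positivity
  have hIpos : 0 < ∫ x, bubPow n n x := by
    rw [hI]
    positivity
  have hC := bubC_pos n k hn
  rw [h1, h2]
  refine ⟨hIntg.const_mul _, ?_, hIntg, hIpos, ?_⟩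
  · rw [MeasureTheory.integral_const_mul]
    exact mul_pos hC hIpos
  · rw [MeasureTheory.integral_const_mul, Finset.prod_div_distrib]
    change bubC n k * _ = bubC n k / _ * _ * _
    rw [Finset.prod_const, Nat.card_Icc, Nat.add_sub_cancel]
    generalize 2 * π ^ (((n : ℝ) + 1) / 2) / Real.Gamma (((n : ℝ) + 1) / 2) = W at *
    generalize (∫ x, bubPow n n x) = I at *
    have hω' : W = I * 2 ^ (n : ℝ) := by
      rw [hI]
      field_simp
    have e4 : ((2 : ℝ) ^ (n : ℝ)) ^ ((2 * k : ℝ) / n) = 4 ^ k := by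
      rw [← Real.rpow_mul two_pos.le, show (n : ℝ) * ((2 * k : ℝ) / n) = ((2 * k : ℕ) : ℝ) by
        push_cast; field_simp, Real.rpow_natCast, pow_mul]
      norm_num
    have eI : I ^ ((2 * k : ℝ) / n) * I ^ (((n : ℝ) - 2 * k) / n) = I := by
      rw [← Real.rpow_add hIpos]
      have : (2 * k : ℝ) / n + ((n : ℝ) - 2 * k) / n = 1 := by field_simp; ring
      rw [this, Real.rpow_one]
    rw [hω', Real.mul_rpow hIpos.le (by positivity), e4]
    have p4 : (4 : ℝ) ^ k ≠ 0 := by positivity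
    calc bubC n k * I
        = bubC n k * (I ^ ((2 * k : ℝ) / n) * I ^ (((n : ℝ) - 2 * k) / n)) := by rw [eI]
      _ = _ := by field_simp
end

section
/- Let μ be the probability measure on ℝ² given by dμ(x) = π^{−1}(1+|x|²)^{−2} dx. Then for every smooth compactly supported function u : ℝ² → ℝ, log( ∫_{ℝ²} e^{u} dμ ) ≤ ∫_{ℝ²} u dμ + (1/(16π)) ∫_{ℝ²} |∇u(x)|² dx. -/
open scoped Real
open MeasureTheory

/-- The probability measure `dμ(x) = π⁻¹(1+|x|²)⁻² dx` on `ℝ²` (the pushforward of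
the round measure on `S²` under stereographic projection, normalised). -/
noncomputable def sphMeasure : Measure (EuclideanSpace ℝ (Fin 2)) :=
  volume.withDensity fun x => ENNReal.ofReal (π⁻¹ * ((1 + ‖x‖ ^ 2) ^ 2)⁻¹)


namespace Onofri
open Filter Topology Set

/-- If two functions differ by a function supported in `[-r,r]`, limits of symmetric integrals. -/
lemma tendsto_split {f f0 f1 : ℝ → ℝ} {r c : ℝ} (hr : 0 < r) (h0 : Continuous f0)
    (h1 : Continuous f1) (hs : ∀ y, r ≤ |y| → f1 y = 0) (hf : ∀ y, f y = f1 y + f0 y)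
    (hl : Tendsto (fun L : ℝ => ∫ y in (-L)..L, f0 y) atTop (𝓝 c)) :
    Tendsto (fun L : ℝ => ∫ y in (-L)..L, f y) atTop (𝓝 ((∫ y in (-r)..r, f1 y) + c)) := by
  have : (fun L : ℝ => ∫ y in (-L)..L, f y) =ᶠ[atTop]
      fun L => (∫ y in (-r)..r, f1 y) + ∫ y in (-L)..L, f0 y := by
    filter_upwards [eventually_ge_atTop r] with L hL
    have e : (∫ y in (-L)..L, f y) = ∫ y in (-L)..L, (f1 y + f0 y) := by
      congr 1; ext y; exact hf y
    rw [e, intervalIntegral.integral_add (h1.intervalIntegrable _ _) (h0.intervalIntegrable _ _)]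
    congr 1
    have i := fun a b => h1.intervalIntegrable (μ := volume) a b
    rw [← intervalIntegral.integral_add_adjacent_intervals (i (-L) (-r)) (i (-r) L),
      ← intervalIntegral.integral_add_adjacent_intervals (i (-r) r) (i r L)]
    have z1 : (∫ y in (-L)..(-r), f1 y) = 0 := by
      rw [intervalIntegral.integral_congr (g := fun _ => (0 : ℝ)), intervalIntegral.integral_zero]
      intro y hy
      rw [uIcc_of_le (by linarith)] at hy
      exact hs y (by rw [abs_of_nonpos (by linarith [hy.2])]; linarith [hy.2])
    have z2 : (∫ y in r..L, f1 y) = 0 := by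
      rw [intervalIntegral.integral_congr (g := fun _ => (0 : ℝ)), intervalIntegral.integral_zero]
      intro y hy
      rw [uIcc_of_le (by linarith)] at hy
      exact hs y (by rw [abs_of_nonneg (by linarith [hy.1])]; linarith [hy.1])
    rw [z1, z2]; ring
  rw [tendsto_congr' this]
  exact hl.const_add _

lemma hasDerivAt_arctan_div {A : ℝ} (hA : 0 < A) (y : ℝ) :
    HasDerivAt (fun y => Real.arctan (y / A) / A) (A ^ 2 + y ^ 2)⁻¹ y := by
  have h := (((hasDerivAt_id y).div_const A).arctan).div_const A
  refine h.congr_deriv ?_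
  simp only [id]
  field_simp

lemma hasDerivAt_prim2 {A : ℝ} (hA : 0 < A) (y : ℝ) :
    HasDerivAt (fun y => y / (2 * A ^ 2 * (A ^ 2 + y ^ 2)) + Real.arctan (y / A) / A / (2 * A ^ 2))
      (((A ^ 2 + y ^ 2) ^ 2)⁻¹) y := by
  have hD : A ^ 2 + y ^ 2 ≠ 0 := by positivity
  have h1 : HasDerivAt (fun y : ℝ => 2 * A ^ 2 * (A ^ 2 + y ^ 2)) (2 * A ^ 2 * (2 * y)) y := by
    have := (((hasDerivAt_pow 2 y).const_add (A ^ 2)).const_mul (2 * A ^ 2))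
    simpa using this
  have h := ((hasDerivAt_id y).div h1 (by positivity)).add
    ((hasDerivAt_arctan_div hA y).div_const (2 * A ^ 2))
  refine h.congr_deriv ?_
  simp only [id]
  field_simp
  ring

lemma tendsto_arctan_div {A : ℝ} (hA : 0 < A) :
    Tendsto (fun L => Real.arctan (L / A) / A) atTop (𝓝 (π / 2 / A)) := by
  refine Tendsto.div_const ?_ A
  exact (Real.tendsto_arctan_atTop.mono_right nhdsWithin_le_nhds).comp (tendsto_id.atTop_div_const hA)

lemma base1 {A : ℝ} (hA : 0 < A) :
    Tendsto (fun L : ℝ => ∫ y in (-L)..L, (A ^ 2 + y ^ 2)⁻¹) atTop (𝓝 (π / A)) := by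
  have e : ∀ L : ℝ, (∫ y in (-L)..L, (A ^ 2 + y ^ 2)⁻¹) = 2 * (Real.arctan (L / A) / A) := by
    intro L
    rw [intervalIntegral.integral_eq_sub_of_hasDerivAt (fun y _ => hasDerivAt_arctan_div hA y)]
    · rw [neg_div, Real.arctan_neg]; ring
    · apply Continuous.intervalIntegrable
      exact Continuous.inv₀ (by fun_prop) (fun y => by positivity)
  simp_rw [e]
  have := (tendsto_arctan_div hA).const_mul 2
  convert this using 2
  ring

lemma base2 {A : ℝ} (hA : 0 < A) :
    Tendsto (fun L : ℝ => ∫ y in (-L)..L, ((A ^ 2 + y ^ 2) ^ 2)⁻¹) atTop (𝓝 (π / (2 * A ^ 3))) := by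
  have e : ∀ L : ℝ, (∫ y in (-L)..L, ((A ^ 2 + y ^ 2) ^ 2)⁻¹) =
     (1 / A ^ 2) * (L / (A ^ 2 + L ^ 2)) + (1 / A ^ 2) * (Real.arctan (L / A) / A) := by
    intro L
    rw [intervalIntegral.integral_eq_sub_of_hasDerivAt (fun y _ => hasDerivAt_prim2 hA y)]
    · rw [neg_div A L, Real.arctan_neg]
      have hD : A ^ 2 + L ^ 2 ≠ 0 := by positivity
      field_simp
      ring
    · apply Continuous.intervalIntegrable
      exact Continuous.inv₀ (by fun_prop) (fun y => by positivity)
  simp_rw [e]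
  have h0 : Tendsto (fun L : ℝ => L / (A ^ 2 + L ^ 2)) atTop (𝓝 0) := by
    refine squeeze_zero' (g := fun L => L⁻¹) ?_ ?_ tendsto_inv_atTop_zero
    · filter_upwards [eventually_ge_atTop 0] with L hL; positivity
    · filter_upwards [eventually_gt_atTop 0] with L hL
      rw [div_le_iff₀ (by positivity)]
      field_simp
      nlinarith [sq_nonneg A]
  have := (h0.const_mul (1 / A ^ 2)).add ((tendsto_arctan_div hA).const_mul (1 / A ^ 2))
  convert this using 2
  field_simp
  ring

lemma theta_cos_le_sin {t : ℝ} (h0 : 0 < t) (h1 : t < π) : t * Real.cos t ≤ Real.sin t := by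
  rcases lt_or_ge t (π / 2) with h | h
  · have hc := Real.cos_pos_of_mem_Ioo ⟨by linarith, h⟩
    have := Real.lt_tan h0 h
    rw [Real.tan_eq_sin_div_cos, lt_div_iff₀ hc] at this
    exact this.le
  · have hc := Real.cos_nonpos_of_pi_div_two_le_of_le h (by linarith)
    have := Real.sin_pos_of_pos_of_lt_pi h0 h1
    nlinarith

lemma arctan_lower {z : ℝ} (hz : 0 < z) : z / (1 + z ^ 2) ≤ Real.arctan z := by
  have h0 := Real.arctan_pos.2 hz
  have h1 := Real.arctan_lt_pi_div_two z
  have hc := Real.cos_pos_of_mem_Ioo ⟨by linarith, h1⟩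
  have h2 := Real.cos_sq_arctan z
  have ht := Real.tan_arctan z
  rw [Real.tan_eq_sin_div_cos, div_eq_iff hc.ne'] at ht
  have hs := Real.sin_lt h0
  have hc1 := Real.cos_le_one (Real.arctan z)
  have : z / (1 + z ^ 2) = Real.sin (Real.arctan z) * Real.cos (Real.arctan z) := by
    rw [ht, mul_assoc, ← sq, h2]; ring
  rw [this]
  nlinarith [Real.sin_pos_of_pos_of_lt_pi h0 (by linarith)]

lemma tail_lower {A L : ℝ} (hA : 0 < A) (hL : 0 < L) :
    L / (A ^ 2 + L ^ 2) ≤ Real.arctan (-L / A) / A + π / 2 / A := by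
  have h := arctan_lower (z := A / L) (by positivity)
  have e : Real.arctan (-L / A) = - (π / 2 - Real.arctan (A / L)) := by
    rw [neg_div, Real.arctan_neg, ← Real.arctan_inv_of_pos (by positivity), inv_div]
  rw [e]
  have : -(π / 2 - Real.arctan (A / L)) / A + π / 2 / A = Real.arctan (A / L) / A := by ring
  rw [this, le_div_iff₀ hA]
  refine le_trans (le_of_eq ?_) h
  field_simp
  ring

end Onofri

namespace Onofri
open Filter Topology Set

/-- Primitive of a function supported in `[-r,r]`. -/
lemma prim_left {f : ℝ → ℝ} {r y : ℝ} (hr : 0 < r) (hs : ∀ y, r ≤ |y| → f y = 0) (hy : y ≤ -r) :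
    (∫ s in (-r)..y, f s) = 0 := by
  rw [intervalIntegral.integral_congr (g := fun _ => (0 : ℝ)), intervalIntegral.integral_zero]
  intro s hsy
  rw [uIcc_of_ge (by linarith)] at hsy
  exact hs s (by rw [abs_of_nonpos (by linarith [hsy.2])]; linarith [hsy.2])

lemma prim_right {f : ℝ → ℝ} {r y : ℝ} (hr : 0 < r) (hf : Continuous f)
    (hs : ∀ y, r ≤ |y| → f y = 0) (hy : r ≤ y) :
    (∫ s in (-r)..y, f s) = ∫ s in (-r)..r, f s := by
  rw [← intervalIntegral.integral_add_adjacent_intervals (hf.intervalIntegrable (-r) r)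
    (hf.intervalIntegrable r y)]
  rw [intervalIntegral.integral_congr (a := r) (g := fun _ => (0 : ℝ)),
    intervalIntegral.integral_zero, add_zero]
  intro s hsy
  rw [uIcc_of_le (by linarith)] at hsy
  exact hs s (by rw [abs_of_nonneg (by linarith [hsy.1])]; linarith [hsy.1])

lemma inner_ineq {A r : ℝ} (hA : 0 < A) (hr : 0 < r) {v v' : ℝ → ℝ} (hv : Continuous v)
    (hv' : Continuous v') (hd : ∀ y, HasDerivAt v (v' y) y)
    (hs : ∀ y, r ≤ |y| → v y = 0) (hs' : ∀ y, r ≤ |y| → v' y = 0) (φ M : ℝ)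
    (hφ : φ = (∫ y in (-r)..r, (Real.exp (v y / 2) - 1) * (A ^ 2 + y ^ 2)⁻¹) + π / A)
    (hM : M = (∫ y in (-r)..r, (Real.exp (v y) - 1) * ((A ^ 2 + y ^ 2) ^ 2)⁻¹) + π / (2 * A ^ 3)) :
    0 < φ ∧ 4 * π ^ 2 * M / φ ^ 2 ≤
      (∫ y in (-r)..r, (v' y ^ 2 / 4 - 2 * y * v' y * (A ^ 2 + y ^ 2)⁻¹)) + 2 * π / A := by
  have hD : ∀ y : ℝ, A ^ 2 + y ^ 2 ≠ 0 := fun y => by positivity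
  have cD : Continuous fun y : ℝ => (A ^ 2 + y ^ 2)⁻¹ := Continuous.inv₀ (by fun_prop) hD
  have cD2 : Continuous fun y : ℝ => ((A ^ 2 + y ^ 2) ^ 2)⁻¹ :=
    Continuous.inv₀ (by fun_prop) (fun y => by positivity)
  set g : ℝ → ℝ := fun y => (Real.exp (v y / 2) - 1) * (A ^ 2 + y ^ 2)⁻¹ with hg
  have cg : Continuous g := by fun_prop
  have sg : ∀ y, r ≤ |y| → g y = 0 := fun y hy => by simp [hg, hs y hy]
  set h : ℝ → ℝ := fun y => Real.exp (v y / 2) * (A ^ 2 + y ^ 2)⁻¹ with hh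
  have ch : Continuous h := by fun_prop
  have hpos : ∀ y, 0 < h y := fun y => by simp only [hh]; positivity
  set t : ℝ → ℝ := fun y => (∫ s in (-r)..y, g s) + (Real.arctan (y / A) / A + π / 2 / A) with ht
  have dt : ∀ y, HasDerivAt t (h y) y := by
    intro y
    have := (cg.integral_hasStrictDerivAt (-r) y).hasDerivAt.add
      ((hasDerivAt_arctan_div hA y).add_const (π / 2 / A))
    refine this.congr_deriv ?_
    simp only [hg, hh]; ring
  have mt : StrictMono t := strictMono_of_hasDerivAt_pos dt hpos
  have t1 : ∀ L, r ≤ L → L / (A ^ 2 + L ^ 2) ≤ t (-L) := by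
    intro L hL
    simp only [ht]
    rw [prim_left hr sg (by linarith), zero_add]
    exact tail_lower hA (by linarith)
  have t2 : ∀ L, r ≤ L → t L = φ - t (-L) := by
    intro L hL
    simp only [ht]
    rw [prim_left hr sg (y := -L) (by linarith), prim_right hr cg sg hL, hφ, neg_div,
      Real.arctan_neg]
    ring
  have tpos : ∀ y, 0 < t y := by
    intro y
    have h1 : 0 < t (-(max r (-y))) := by
      refine lt_of_lt_of_le ?_ (t1 _ (le_max_left _ _))
      have : 0 < max r (-y) := lt_of_lt_of_le hr (le_max_left _ _)
      positivity
    exact h1.trans_le (mt.monotone (by linarith [le_max_right r (-y)]))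
  have tlt : ∀ y, t y < φ := by
    intro y
    have h1 := t2 (max r y) (le_max_left _ _)
    have h2 := tpos (-(max r y))
    exact (mt.monotone (le_max_right r y)).trans_lt (by linarith)
  have φpos : 0 < φ := (tpos 0).trans (tlt 0)
  refine ⟨φpos, ?_⟩
  set κ : ℝ := π / φ with hκ
  have κpos : 0 < κ := by positivity
  have θpos : ∀ y, 0 < κ * t y := fun y => mul_pos κpos (tpos y)
  have θlt : ∀ y, κ * t y < π := fun y => by
    rw [hκ, div_mul_eq_mul_div, div_lt_iff₀ φpos]
    exact mul_lt_mul_of_pos_left (tlt y) Real.pi_pos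
  have spos : ∀ y, 0 < Real.sin (κ * t y) := fun y =>
    Real.sin_pos_of_pos_of_lt_pi (θpos y) (θlt y)
  set p : ℝ → ℝ := fun y => v' y / 2 - 2 * y * (A ^ 2 + y ^ 2)⁻¹ with hp
  have cp : Continuous p := by fun_prop
  have dh : ∀ y, HasDerivAt h (h y * p y) y := by
    intro y
    have e1 : HasDerivAt (fun y : ℝ => A ^ 2 + y ^ 2) (2 * y) y := by
      simpa using (hasDerivAt_pow 2 y).const_add (A ^ 2)
    have := (((hd y).div_const 2).exp).mul (e1.fun_inv (hD y))
    refine this.congr_deriv ?_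
    simp only [hh, hp]
    have := hD y
    field_simp
    ring
  set G : ℝ → ℝ := fun y => h y * Real.cos (κ * t y) / Real.sin (κ * t y) with hG
  have dG : ∀ y, HasDerivAt G (h y * p y * Real.cos (κ * t y) / Real.sin (κ * t y) -
      κ * h y ^ 2 / Real.sin (κ * t y) ^ 2) y := by
    intro y
    have e1 := (dt y).const_mul κ
    have := ((dh y).mul e1.cos).div e1.sin (spos y).ne'
    refine this.congr_deriv ?_
    have hne := (spos y).ne'
    have hsc := Real.sin_sq_add_cos_sq (κ * t y)
    simp only [Pi.mul_apply]
    field_simp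
    linear_combination (- κ * h y ^ 2) * hsc
  -- the inequality on [-L, L]
  have key : ∀ L, r ≤ L → -(2 / L) ≤ ∫ y in (-L)..L, (p y ^ 2 / 4 - κ ^ 2 * h y ^ 2) := by
    intro L hL
    have L0 : 0 < L := by linarith
    have cG : Continuous G := continuous_iff_continuousAt.2 fun y => (dG y).continuousAt
    have h1 := intervalIntegral.sub_le_integral_of_hasDeriv_right_of_le
      (g := fun y => κ * G y) (a := -L) (b := L)
      (φ := fun y => p y ^ 2 / 4 - κ ^ 2 * h y ^ 2) (by linarith)
      (by fun_prop) (fun y _ => ((dG y).const_mul κ).hasDerivWithinAt)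
      (by apply Continuous.integrableOn_Icc; fun_prop)
      (by
        intro y _
        have hsc := Real.sin_sq_add_cos_sq (κ * t y)
        have hne := (spos y).ne'
        have : p y ^ 2 / 4 - κ ^ 2 * h y ^ 2 - κ * (h y * p y * Real.cos (κ * t y) / Real.sin (κ * t y) -
          κ * h y ^ 2 / Real.sin (κ * t y) ^ 2) =
          (p y / 2 - κ * h y * Real.cos (κ * t y) / Real.sin (κ * t y)) ^ 2 := by
          field_simp
          linear_combination (-16 * κ ^ 2 * h y ^ 2) * hsc
        nlinarith [sq_nonneg (p y / 2 - κ * h y * Real.cos (κ * t y) / Real.sin (κ * t y))])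
    refine le_trans ?_ h1
    have hL1 : h L = (A ^ 2 + L ^ 2)⁻¹ := by
      simp [hh, hs L (by rw [abs_of_pos L0]; exact hL)]
    have hL2 : h (-L) = (A ^ 2 + L ^ 2)⁻¹ := by
      simp [hh, hs (-L) (by rw [abs_neg, abs_of_pos L0]; exact hL)]
    have eθ : κ * t L = π - κ * t (-L) := by
      rw [t2 L hL, hκ]; field_simp
    have eG : G L = - G (-L) := by
      simp only [hG]
      rw [eθ, Real.cos_pi_sub, Real.sin_pi_sub, hL1, hL2]; ring
    have bG : κ * G (-L) ≤ 1 / L := by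
      simp only [hG]
      rw [hL2]
      have b1 := theta_cos_le_sin (θpos (-L)) (θlt (-L))
      have b2 : Real.cos (κ * t (-L)) / Real.sin (κ * t (-L)) ≤ 1 / (κ * t (-L)) := by
        rw [div_le_div_iff₀ (spos _) (θpos _)]; linarith
      have b3 := t1 L hL
      have b4 : κ * ((A ^ 2 + L ^ 2)⁻¹ * Real.cos (κ * t (-L)) / Real.sin (κ * t (-L)))
          ≤ κ * (A ^ 2 + L ^ 2)⁻¹ * (1 / (κ * t (-L))) := by
        rw [mul_div_assoc, ← mul_assoc]
        exact mul_le_mul_of_nonneg_left b2 (by positivity)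
      refine b4.trans ?_
      have tp := tpos (-L)
      have hDL : 0 < A ^ 2 + L ^ 2 := by positivity
      rw [div_le_iff₀ hDL] at b3
      field_simp
      linarith
    have : κ * G L - κ * G (-L) = - (2 * (κ * G (-L))) := by rw [eG]; ring
    rw [this]
    have : 2 / L = 2 * (1 / L) := by ring
    linarith
  -- pass to the limit
  have l1 : Tendsto (fun L : ℝ => ∫ y in (-L)..L, (p y ^ 2 / 4 - κ ^ 2 * h y ^ 2)) atTop
      (𝓝 ((∫ y in (-r)..r, ((v' y ^ 2 / 4 - 2 * y * v' y * (A ^ 2 + y ^ 2)⁻¹) * (1 / 4) -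
         κ ^ 2 * ((Real.exp (v y) - 1) * ((A ^ 2 + y ^ 2) ^ 2)⁻¹)))
        + (π / A - (A ^ 2 + κ ^ 2) * (π / (2 * A ^ 3))))) := by
    refine tendsto_split hr (f0 := fun y => (A ^ 2 + y ^ 2)⁻¹ -
      (A ^ 2 + κ ^ 2) * ((A ^ 2 + y ^ 2) ^ 2)⁻¹) (by fun_prop) (by fun_prop) ?_ ?_ ?_
    · intro y hy; simp [hs y hy, hs' y hy]
    · intro y
      have e : Real.exp (v y) = Real.exp (v y / 2) ^ 2 := by
        rw [← Real.exp_nat_mul]; congr 1; push_cast; ring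
      simp only [hp, hh, e]
      have := hD y
      field_simp
      ring
    · have : ∀ L : ℝ, (∫ y in (-L)..L, ((A ^ 2 + y ^ 2)⁻¹ - (A ^ 2 + κ ^ 2) * ((A ^ 2 + y ^ 2) ^ 2)⁻¹))
        = (∫ y in (-L)..L, (A ^ 2 + y ^ 2)⁻¹) -
          (A ^ 2 + κ ^ 2) * ∫ y in (-L)..L, ((A ^ 2 + y ^ 2) ^ 2)⁻¹ := by
        intro L
        rw [intervalIntegral.integral_sub (cD.intervalIntegrable _ _)
          ((cD2.const_mul _).intervalIntegrable _ _), intervalIntegral.integral_const_mul]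
      simp_rw [this]
      exact (base1 hA).sub ((base2 hA).const_mul _)
  have l2 : Tendsto (fun L : ℝ => -(2 / L)) atTop (𝓝 (-0)) :=
    (tendsto_const_nhds.div_atTop tendsto_id).neg
  have fin := le_of_tendsto_of_tendsto l2 l1
    (by filter_upwards [eventually_ge_atTop r] with L hL using key L hL)
  rw [intervalIntegral.integral_sub (Continuous.intervalIntegrable (by fun_prop) _ _)
    (Continuous.intervalIntegrable (by fun_prop) _ _), intervalIntegral.integral_mul_const,
    intervalIntegral.integral_const_mul] at fin
  have eM : 4 * π ^ 2 * M / φ ^ 2 = 4 * κ ^ 2 * M := by rw [hκ]; field_simp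
  rw [eM]
  rw [hM]
  have e3 : 2 * π / A = 4 * (π / A - A ^ 2 * (π / (2 * A ^ 3))) := by field_simp; ring
  rw [e3]
  linarith

lemma kineq {A r x k : ℝ} (hA : 0 < A) (hr : 0 < r) {v w : ℝ → ℝ} (hv : Continuous v)
    (hw : Continuous w) 
    (hs : ∀ y, r ≤ |y| → v y = 0) (hs' : ∀ y, r ≤ |y| → w y = 0) (M φ' : ℝ)
    (hM : M = (∫ y in (-r)..r, (Real.exp (v y) - 1) * ((A ^ 2 + y ^ 2) ^ 2)⁻¹) + π / (2 * A ^ 3))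
    (hφ' : φ' = (∫ y in (-r)..r, (Real.exp (v y / 2) * (w y / 2) * (A ^ 2 + y ^ 2)⁻¹
      - (Real.exp (v y / 2) - 1) * (2 * x * ((A ^ 2 + y ^ 2) ^ 2)⁻¹))) - π * x / A ^ 3) :
    0 ≤ M ∧ -(2 * k * φ') - k ^ 2 * M ≤
      (∫ y in (-r)..r, (w y ^ 2 / 4 - 2 * x * w y * (A ^ 2 + y ^ 2)⁻¹))
        + 2 * π * x ^ 2 / A ^ 3 := by
  have hD : ∀ y : ℝ, A ^ 2 + y ^ 2 ≠ 0 := fun y => by positivity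
  have cD : Continuous fun y : ℝ => (A ^ 2 + y ^ 2)⁻¹ := Continuous.inv₀ (by fun_prop) hD
  have cD2 : Continuous fun y : ℝ => ((A ^ 2 + y ^ 2) ^ 2)⁻¹ :=
    Continuous.inv₀ (by fun_prop) (fun y => by positivity)
  have e : ∀ y, Real.exp (v y) = Real.exp (v y / 2) ^ 2 := fun y => by
    rw [← Real.exp_nat_mul]; congr 1; push_cast; ring
  have hb : ∀ c : ℝ, Tendsto (fun L : ℝ => ∫ y in (-L)..L, c * ((A ^ 2 + y ^ 2) ^ 2)⁻¹) atTop
      (𝓝 (c * (π / (2 * A ^ 3)))) := fun c => by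
    simp_rw [intervalIntegral.integral_const_mul]
    exact (base2 hA).const_mul c
  constructor
  · have l1 := tendsto_split (f := fun y => (Real.exp (v y / 2) * (A ^ 2 + y ^ 2)⁻¹) ^ 2) hr
      (f0 := fun y => 1 * ((A ^ 2 + y ^ 2) ^ 2)⁻¹)
      (f1 := fun y => (Real.exp (v y) - 1) * ((A ^ 2 + y ^ 2) ^ 2)⁻¹) (by fun_prop) (by fun_prop)
      (fun y hy => by simp [hs y hy])
      (fun y => by rw [e]; have := hD y; field_simp; ring) (hb 1)
    rw [one_mul, ← hM] at l1
    refine ge_of_tendsto l1 ?_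
    filter_upwards [eventually_ge_atTop 0] with L hL
    exact intervalIntegral.integral_nonneg (by linarith) (fun y _ => sq_nonneg _)
  · have l1 := tendsto_split (f := fun y => (w y / 2 - 2 * x * (A ^ 2 + y ^ 2)⁻¹ +
        k * (Real.exp (v y / 2) * (A ^ 2 + y ^ 2)⁻¹)) ^ 2) hr
      (f0 := fun y => (4 * x ^ 2 - 4 * k * x + k ^ 2) * ((A ^ 2 + y ^ 2) ^ 2)⁻¹)
      (f1 := fun y => (w y ^ 2 / 4 - 2 * x * w y * (A ^ 2 + y ^ 2)⁻¹) +
        (2 * k * (Real.exp (v y / 2) * (w y / 2) * (A ^ 2 + y ^ 2)⁻¹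
          - (Real.exp (v y / 2) - 1) * (2 * x * ((A ^ 2 + y ^ 2) ^ 2)⁻¹)) +
        k ^ 2 * ((Real.exp (v y) - 1) * ((A ^ 2 + y ^ 2) ^ 2)⁻¹)))
      (by fun_prop) (by fun_prop)
      (fun y hy => by simp [hs y hy, hs' y hy])
      (fun y => by rw [e]; have := hD y; field_simp; ring) (hb _)
    have fin := ge_of_tendsto l1 (b := 0) (by
      filter_upwards [eventually_ge_atTop 0] with L hL
      exact intervalIntegral.integral_nonneg (by linarith) (fun y _ => sq_nonneg _))
    rw [intervalIntegral.integral_add (Continuous.intervalIntegrable (by fun_prop) _ _)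
      (Continuous.intervalIntegrable (by fun_prop) _ _), 
      intervalIntegral.integral_add (Continuous.intervalIntegrable (by fun_prop) _ _)
      (Continuous.intervalIntegrable (by fun_prop) _ _), 
      intervalIntegral.integral_const_mul, intervalIntegral.integral_const_mul] at fin
    rw [hM, hφ']
    have e1 : π * x / A ^ 3 = 2 * x * (π / (2 * A ^ 3)) := by field_simp
    have e2 : 2 * π * x ^ 2 / A ^ 3 = 4 * x ^ 2 * (π / (2 * A ^ 3)) := by field_simp; ring
    rw [e1, e2]
    linarith

end Onofri

namespace Onofri
open Filter Topology Set

lemma param_deriv {f f' : ℝ → ℝ → ℝ} (cf : Continuous (Function.uncurry f))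
    (cf' : Continuous (Function.uncurry f'))
    (hd : ∀ x y, HasDerivAt (fun s => f s y) (f' x y) x) (a b x : ℝ) :
    HasDerivAt (fun x => ∫ y in a..b, f x y) (∫ y in a..b, f' x y) x := by
  obtain ⟨C, hC⟩ := ((isCompact_closedBall x (1 : ℝ)).prod (isCompact_uIcc (a := a) (b := b))
    ).exists_bound_of_continuousOn cf'.continuousOn
  have c1 : ∀ x, Continuous (f x) := fun x => cf.comp (by fun_prop : Continuous fun y => (x, y))
  have c2 : ∀ x, Continuous (f' x) := fun x => cf'.comp (by fun_prop : Continuous fun y => (x, y))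
  refine (intervalIntegral.hasDerivAt_integral_of_dominated_loc_of_deriv_le (bound := fun _ => C)
    (Metric.closedBall_mem_nhds x one_pos) ?_ ?_ ?_ ?_ ?_ ?_).2
  · exact Eventually.of_forall fun x => (c1 x).aestronglyMeasurable
  · exact (c1 x).intervalIntegrable _ _
  · exact (c2 x).aestronglyMeasurable
  · exact Eventually.of_forall fun y hy s hs => hC (s, y) ⟨hs, uIoc_subset_uIcc hy⟩
  · exact intervalIntegrable_const
  · exact Eventually.of_forall fun y hy s hs => hd s y

lemma hasDerivAt_sqrt1 (x : ℝ) :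
    HasDerivAt (fun x : ℝ => √(1 + x ^ 2)) (x / √(1 + x ^ 2)) x := by
  have h1 : HasDerivAt (fun x : ℝ => 1 + x ^ 2) (2 * x) x := by
    simpa using (hasDerivAt_pow 2 x).const_add 1
  refine (h1.sqrt (by positivity)).congr_deriv ?_
  field_simp

lemma hasDerivAt_c (x : ℝ) :
    HasDerivAt (fun x : ℝ => x / √(1 + x ^ 2)) (1 / √(1 + x ^ 2) ^ 3) x := by
  have hA : 0 < √(1 + x ^ 2) := Real.sqrt_pos.2 (by positivity)
  have hA2 : √(1 + x ^ 2) ^ 2 = 1 + x ^ 2 := Real.sq_sqrt (by positivity)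
  refine ((hasDerivAt_id x).div (hasDerivAt_sqrt1 x) hA.ne').congr_deriv ?_
  simp only [id]
  field_simp
  linear_combination hA2

lemma c_sq (x : ℝ) : (x / √(1 + x ^ 2)) ^ 2 = 1 - 1 / √(1 + x ^ 2) ^ 2 := by
  have hA2 : √(1 + x ^ 2) ^ 2 = 1 + x ^ 2 := Real.sq_sqrt (by positivity)
  rw [div_pow, hA2]; field_simp; ring

lemma c_mem (x : ℝ) : -1 < x / √(1 + x ^ 2) ∧ x / √(1 + x ^ 2) < 1 := by
  have h := c_sq x
  have hA : 0 < √(1 + x ^ 2) := Real.sqrt_pos.2 (by positivity)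
  have : 0 < 1 / √(1 + x ^ 2) ^ 2 := by positivity
  exact abs_lt.1 ((sq_lt_one_iff_abs_lt_one _).1 (by linarith))

lemma tendsto_c : Tendsto (fun x : ℝ => x / √(1 + x ^ 2)) atTop (𝓝 1) := by
  have h1 : Tendsto (fun x : ℝ => Real.sin (Real.arctan x)) atTop (𝓝 (Real.sin (π / 2))) :=
    (Real.continuous_sin.tendsto _).comp
      (Real.tendsto_arctan_atTop.mono_right nhdsWithin_le_nhds)
  simpa [Real.sin_arctan] using h1

lemma tangent {a b : ℝ} (ha : 0 < a) (hb : 0 < b) : 3 / b ^ 2 - 2 * a / b ^ 3 ≤ 1 / a ^ 2 := by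
  have : 1 / a ^ 2 - (3 / b ^ 2 - 2 * a / b ^ 3) = (a - b) ^ 2 * (2 * a + b) / (a ^ 2 * b ^ 3) := by
    field_simp; ring
  have h2 : 0 ≤ (a - b) ^ 2 * (2 * a + b) / (a ^ 2 * b ^ 3) := by positivity
  linarith

lemma outer {r : ℝ} (hr : 0 < r) {M1 φ φ' E : ℝ → ℝ} (cM : Continuous M1)
    (sM : ∀ x, r ≤ |x| → M1 x = 0) (sφ : ∀ x, r ≤ |x| → φ x = π / √(1 + x ^ 2))
    (dφ : ∀ x, HasDerivAt φ (φ' x) x) (φpos : ∀ x, 0 < φ x) (cE : Continuous E)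
    (sE : ∀ x, r ≤ |x| → E x = 0)
    (hM : ∀ x, 0 ≤ M1 x + π / (2 * √(1 + x ^ 2) ^ 3))
    (ineq : ∀ x k, 4 * π ^ 2 * (M1 x + π / (2 * √(1 + x ^ 2) ^ 3)) / φ x ^ 2 - 2 * k * φ' x
      - k ^ 2 * (M1 x + π / (2 * √(1 + x ^ 2) ^ 3)) ≤
      E x + (4 * π / √(1 + x ^ 2) - 2 * π / √(1 + x ^ 2) ^ 3)) :
    0 < π + (∫ x in (-r)..r, M1 x) ∧
    4 * π * (Real.log (π + (∫ x in (-r)..r, M1 x)) - Real.log π) ≤ ∫ x in (-r)..r, E x := by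
  set N := π + (∫ x in (-r)..r, M1 x) with hN
  set c : ℝ → ℝ := fun x => x / √(1 + x ^ 2) with hc
  have cneg : ∀ x, c (-x) = - c x := fun x => by simp [hc, neg_div]
  have dc : ∀ x, HasDerivAt c (1 / √(1 + x ^ 2) ^ 3) x := hasDerivAt_c
  set m : ℝ → ℝ := fun x => (∫ s in (-r)..x, M1 s) + π / 2 * (1 + c x) with hm
  set M : ℝ → ℝ := fun x => M1 x + π / (2 * √(1 + x ^ 2) ^ 3) with hMdef
  have dm : ∀ x, HasDerivAt m (M x) x := by
    intro x
    have := (cM.integral_hasStrictDerivAt (-r) x).hasDerivAt.add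
      (((dc x).const_add 1).const_mul (π / 2))
    refine this.congr_deriv ?_
    simp only [hMdef]
    have hA : 0 < √(1 + x ^ 2) := Real.sqrt_pos.2 (by positivity)
    field_simp
  have mm : Monotone m := monotone_of_hasDerivAt_nonneg dm hM
  have m1 : ∀ R, r ≤ R → m (-R) = π / 2 * (1 - c R) := by
    intro R hR
    simp only [hm]
    rw [prim_left hr sM (by linarith), zero_add, cneg]; ring
  have m2 : ∀ R, r ≤ R → m R = N - π / 2 * (1 - c R) := by
    intro R hR
    simp only [hm]
    rw [prim_right hr cM sM hR, hN]; ring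
  have mpos : ∀ x, 0 < m x := by
    intro x
    have h1 := m1 (max r (-x)) (le_max_left _ _)
    have h2 := (c_mem (max r (-x))).2
    have h3 : 0 < m (-(max r (-x))) := by
      rw [h1]; exact mul_pos (by positivity) (by simp only [hc]; linarith)
    exact h3.trans_le (mm (by linarith [le_max_right r (-x)]))
  have mlt : ∀ x, m x < N := by
    intro x
    have h1 := m2 (max r x) (le_max_left _ _)
    have h2 := (c_mem (max r x)).2
    have h3 : m (max r x) < N := by
      rw [h1]
      have : 0 < π / 2 * (1 - c (max r x)) := mul_pos (by positivity) (by simp only [hc]; linarith)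
      linarith
    exact (mm (le_max_right r x)).trans_lt h3
  have Npos : 0 < N := (mpos 0).trans (mlt 0)
  refine ⟨Npos, ?_⟩
  set z := √(N / π) with hz
  have zpos : 0 < z := Real.sqrt_pos.2 (by positivity)
  have z2 : N = π * z ^ 2 := by
    rw [hz, Real.sq_sqrt (by positivity)]; field_simp
  set σ : ℝ → ℝ := fun x => 2 * m x / N - 1 with hσ
  have qq : ∀ x, 1 - σ x ^ 2 = 4 * m x * (N - m x) / N ^ 2 := by
    intro x; simp only [hσ]; field_simp; ring
  have qqpos : ∀ x, 0 < 1 - σ x ^ 2 := by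
    intro x; rw [qq]
    have := mpos x
    have : 0 < N - m x := by linarith [mlt x]
    positivity
  set q : ℝ → ℝ := fun x => √(1 - σ x ^ 2) with hq
  have qpos : ∀ x, 0 < q x := fun x => Real.sqrt_pos.2 (qqpos x)
  have q2 : ∀ x, q x ^ 2 = 1 - σ x ^ 2 := fun x => Real.sq_sqrt (qqpos x).le
  have dσ : ∀ x, HasDerivAt σ (2 * M x / N) x := fun x =>
    (((dm x).const_mul 2).div_const N).sub_const 1
  have dq : ∀ x, HasDerivAt q (- (σ x * (2 * M x / N)) / q x) x := by
    intro x
    have := (((dσ x).pow 2).const_sub 1).sqrt (qqpos x).ne'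
    refine this.congr_deriv ?_
    have := (qpos x).ne'
    change -(_ : ℝ) / (2 * q x) = _
    field_simp
    simp
    ring
  have da : ∀ x, HasDerivAt (fun x => σ x / q x) (2 * M x / N / q x ^ 3) x := by
    intro x
    refine ((dσ x).div (dq x) (qpos x).ne').congr_deriv ?_
    have h0 := (qpos x).ne'
    have h1 : σ x ^ 2 = 1 - q x ^ 2 := by rw [q2 x]; ring
    generalize q x = qx at *
    generalize σ x = s at *
    generalize M x = Mx at *
    field_simp
    rw [h1]; ring
  set Q : ℝ → ℝ := fun x => 2 * π * (Real.log (m x) - Real.log (N - m x)) + 2 * π * σ x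
    - 4 / z * (σ x / q x * φ x) with hQ
  set ref : ℝ → ℝ := fun x => 2 * π * (Real.log (1 + c x) - Real.log (1 - c x)) - 2 * π * c x
    with href
  have dref : ∀ x, HasDerivAt ref (4 * π / √(1 + x ^ 2) - 2 * π / √(1 + x ^ 2) ^ 3) x := by
    intro x
    have h1 : 0 < 1 + c x := by linarith [(c_mem x).1]
    have h2 : 0 < 1 - c x := by linarith [(c_mem x).2]
    have hA : 0 < √(1 + x ^ 2) := Real.sqrt_pos.2 (by positivity)
    have := (((((dc x).const_add 1).log h1.ne').sub (((dc x).const_sub 1).log h2.ne')).const_mul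
      (2 * π)).sub ((dc x).const_mul (2 * π))
    refine this.congr_deriv ?_
    have hcs : c x ^ 2 = 1 - 1 / √(1 + x ^ 2) ^ 2 := c_sq x
    have h3 : (1 + c x) * (1 - c x) * √(1 + x ^ 2) ^ 2 = 1 := by
      have : (1 + c x) * (1 - c x) = 1 / √(1 + x ^ 2) ^ 2 := by linear_combination -hcs
      rw [this]; field_simp
    generalize √(1 + x ^ 2) = A at *
    generalize c x = C at *
    field_simp
    linear_combination -4 * h3
  have dQ : ∀ x, HasDerivAt Q (8 * M x / (z ^ 2 * q x ^ 2) + 4 * M x / z ^ 2 -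
      8 * M x * φ x / (π * z ^ 3 * q x ^ 3) - 4 * σ x * φ' x / (q x * z)) x := by
    intro x
    have h1 := mpos x
    have h2 : 0 < N - m x := by linarith [mlt x]
    have := ((((dm x).log h1.ne').sub (((dm x).const_sub N).log h2.ne')).const_mul
      (2 * π)).add ((dσ x).const_mul (2 * π)) |>.sub (((da x).mul (dφ x)).const_mul (4 / z))
    refine this.congr_deriv ?_
    have hq0 := qpos x
    have h3 : q x ^ 2 * N ^ 2 = 4 * m x * (N - m x) := by rw [q2, qq]; field_simp
    have h4 : M x / m x - -M x / (N - m x) = 4 * M x / (N * q x ^ 2) := by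
      generalize q x = qx at *
      generalize m x = mx at *
      generalize M x = Mx at *
      field_simp
      linear_combination Mx * h3
    rw [h4, z2]
    field_simp
    ring
  have der : ∀ x, (8 * M x / (z ^ 2 * q x ^ 2) + 4 * M x / z ^ 2 -
      8 * M x * φ x / (π * z ^ 3 * q x ^ 3) - 4 * σ x * φ' x / (q x * z)) -
      (4 * π / √(1 + x ^ 2) - 2 * π / √(1 + x ^ 2) ^ 3) ≤ E x := by
    intro x
    have h1 := ineq x (2 * σ x / (q x * z))
    have hq0 := qpos x
    have h2 := tangent (φpos x) (b := π * z * q x) (by positivity)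
    have h3 := mul_le_mul_of_nonneg_left h2 (mul_nonneg (by positivity : 0 ≤ 4 * π ^ 2) (hM x))
    change 4 * π ^ 2 * M x / φ x ^ 2 - _ - _ * M x ≤ _ at h1
    change 4 * π ^ 2 * M x * _ ≤ 4 * π ^ 2 * M x * _ at h3
    have h5 : 8 * M x / (z ^ 2 * q x ^ 2) + 4 * M x / z ^ 2 -
        8 * M x * φ x / (π * z ^ 3 * q x ^ 3) - 4 * σ x * φ' x / (q x * z) =
        4 * π ^ 2 * M x * (3 / (π * z * q x) ^ 2 - 2 * φ x / (π * z * q x) ^ 3) -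
        2 * (2 * σ x / (q x * z)) * φ' x - (2 * σ x / (q x * z)) ^ 2 * M x := by
      have h6 : σ x ^ 2 = 1 - q x ^ 2 := by rw [q2 x]; ring
      clear_value q σ M z
      field_simp
      rw [h6]; ring
    rw [h5]
    have h7 : 4 * π ^ 2 * M x / φ x ^ 2 = 4 * π ^ 2 * M x * (1 / φ x ^ 2) := by ring
    linarith
  have main : ∀ R, r ≤ R → (Q R - ref R) - (Q (-R) - ref (-R)) ≤ ∫ x in (-r)..r, E x := by
    intro R hR
    have e : (∫ x in (-R)..R, E x) = ∫ x in (-r)..r, E x := by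
      have a1 := prim_right hr cE sE hR
      have a2 := prim_left hr sE (y := -R) (by linarith)
      have a3 := intervalIntegral.integral_interval_sub_left
        (cE.intervalIntegrable (μ := volume) (-r) R) (cE.intervalIntegrable (-r) (-R))
      linarith
    rw [← e]
    exact intervalIntegral.sub_le_integral_of_hasDeriv_right_of_le
      (g := fun x => Q x - ref x) (a := -R) (b := R) (by linarith)
      (fun x _ => ((dQ x).sub (dref x)).continuousAt.continuousWithinAt)
      (fun x _ => ((dQ x).sub (dref x)).hasDerivWithinAt)
      cE.integrableOn_Icc (fun x _ => der x)
  -- explicit values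
  set J : ℝ → ℝ := fun C => 4 * π * (Real.log (N - π / 2 * (1 - C)) - Real.log (π / 2 * (1 + C)))
    + 4 * π * (1 - π / N * (1 - C)) + 4 * π * C - 8 * π * (1 - π / N * (1 - C)) /
      √(2 * (N - π / 2 * (1 - C)) / (N * (1 + C))) with hJ
  have val : ∀ R, r ≤ R → (Q R - ref R) - (Q (-R) - ref (-R)) = J (c R) := by
    intro R hR
    have R0 : 0 < R := by linarith
    have hA : 0 < √(1 + R ^ 2) := Real.sqrt_pos.2 (by positivity)
    have h1 : 0 < 1 + c R := by linarith [(c_mem R).1]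
    have h2 : 0 < 1 - c R := by linarith [(c_mem R).2]
    have h3 : 0 < N - π / 2 * (1 - c R) := by rw [← m2 R hR]; exact mpos R
    have f1 : φ R = π / √(1 + R ^ 2) := sφ R (by rw [abs_of_pos R0]; exact hR)
    have f2 : φ (-R) = π / √(1 + R ^ 2) := by
      rw [sφ (-R) (by rw [abs_neg, abs_of_pos R0]; exact hR), neg_sq]
    have s1 : σ R = 1 - π / N * (1 - c R) := by
      simp only [hσ]; rw [m2 R hR]; field_simp; ring
    have s2 : σ (-R) = - σ R := by
      rw [s1]; simp only [hσ]; rw [m1 R hR]; field_simp; ring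
    have q1 : q (-R) = q R := by simp only [hq]; rw [s2, neg_sq]
    have hcs : c R ^ 2 = 1 - 1 / √(1 + R ^ 2) ^ 2 := c_sq R
    have q3 : √(2 * (N - π / 2 * (1 - c R)) / (N * (1 + c R))) = q R * z * √(1 + R ^ 2) := by
      have hq0 := qpos R
      rw [Real.sqrt_eq_iff_mul_self_eq (by positivity) (by positivity)]
      have : q R * z * √(1 + R ^ 2) * (q R * z * √(1 + R ^ 2)) =
        q R ^ 2 * z ^ 2 * √(1 + R ^ 2) ^ 2 := by ring
      rw [this, q2, qq, m2 R hR]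
      have hz2 : z ^ 2 = N / π := by rw [z2]; field_simp
      have hA2 : √(1 + R ^ 2) ^ 2 = 1 / ((1 + c R) * (1 - c R)) := by
        have : (1 + c R) * (1 - c R) = 1 / √(1 + R ^ 2) ^ 2 := by linear_combination -hcs
        rw [this]; field_simp
      rw [hz2, hA2]
      field_simp
      ring
    have lg : Real.log (π / 2 * (1 + c R)) = Real.log (π / 2) + Real.log (1 + c R) :=
      Real.log_mul (by positivity) h1.ne'
    have lg2 : Real.log (π / 2 * (1 - c R)) = Real.log (π / 2) + Real.log (1 - c R) :=
      Real.log_mul (by positivity) h2.ne'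
    simp only [hJ, hQ, href]
    rw [q3, lg, s2, q1, f1, f2, cneg, m2 R hR, m1 R hR, ← s1, lg2]
    have e1 : N - (N - π / 2 * (1 - c R)) = π / 2 * (1 - c R) := by ring
    rw [e1, lg2, sub_neg_eq_add, ← sub_eq_add_neg]
    have hq0 := qpos R
    field_simp
    ring
  have cJ : Tendsto J (𝓝 1) (𝓝 (J 1)) := by
    have : ContinuousAt J 1 := by
      simp only [hJ]
      refine ContinuousAt.sub (ContinuousAt.add (ContinuousAt.add ?_ ?_) ?_) ?_
      · refine ContinuousAt.mul continuousAt_const (ContinuousAt.sub ?_ ?_)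
        · exact ContinuousAt.log (by fun_prop) (by simpa using Npos.ne')
        · exact ContinuousAt.log (by fun_prop) (by positivity)
      · fun_prop
      · fun_prop
      · refine ContinuousAt.div (by fun_prop) (ContinuousAt.sqrt (ContinuousAt.div (by fun_prop)
          (by fun_prop) (by positivity))) ?_
        apply Real.sqrt_ne_zero'.2
        simp only [sub_self, mul_zero, sub_zero]
        positivity
    exact this
  have J1 : J 1 = 4 * π * (Real.log N - Real.log π) := by
    simp only [hJ]
    have e1 : 2 * (N - π / 2 * (1 - 1)) / (N * (1 + 1)) = 1 := by field_simp; ring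
    have e2 : π / 2 * (1 + 1) = π := by ring
    rw [e1, e2, Real.sqrt_one]
    ring_nf
  rw [← J1]
  refine le_of_tendsto (cJ.comp tendsto_c) ?_
  filter_upwards [eventually_ge_atTop r] with R hR
  have := main R hR
  rw [val R hR] at this
  exact this

end Onofri

namespace Onofri
open Filter Topology Set

lemma core {r : ℝ} (hr : 0 < r) {U Ux Uy : ℝ → ℝ → ℝ}
    (cU : Continuous (fun p : ℝ × ℝ => U p.1 p.2)) (cUx : Continuous (fun p : ℝ × ℝ => Ux p.1 p.2))
    (cUy : Continuous (fun p : ℝ × ℝ => Uy p.1 p.2))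
    (dx : ∀ x y, HasDerivAt (fun s => U s y) (Ux x y) x)
    (dy : ∀ x y, HasDerivAt (fun s => U x s) (Uy x y) y)
    (sU : ∀ x y, r ≤ |x| ∨ r ≤ |y| → U x y = 0) (sUx : ∀ x y, r ≤ |x| ∨ r ≤ |y| → Ux x y = 0)
    (sUy : ∀ x y, r ≤ |x| ∨ r ≤ |y| → Uy x y = 0) :
    0 < π + (∫ x in (-r)..r, ∫ y in (-r)..r, (Real.exp (U x y) - 1) * ((1 + x ^ 2 + y ^ 2) ^ 2)⁻¹) ∧
    4 * π * (Real.log (π + (∫ x in (-r)..r, ∫ y in (-r)..r,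
      (Real.exp (U x y) - 1) * ((1 + x ^ 2 + y ^ 2) ^ 2)⁻¹)) - Real.log π) ≤
    ∫ x in (-r)..r, ∫ y in (-r)..r,
      ((Ux x y ^ 2 / 4 - 2 * x * Ux x y * (1 + x ^ 2 + y ^ 2)⁻¹) +
       (Uy x y ^ 2 / 4 - 2 * y * Uy x y * (1 + x ^ 2 + y ^ 2)⁻¹)) := by
  have cD : Continuous (fun p : ℝ × ℝ => (1 + p.1 ^ 2 + p.2 ^ 2)⁻¹) :=
    Continuous.inv₀ (by fun_prop) (fun p => by positivity)
  have cD2 : Continuous (fun p : ℝ × ℝ => ((1 + p.1 ^ 2 + p.2 ^ 2) ^ 2)⁻¹) :=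
    Continuous.inv₀ (by fun_prop) (fun p => by positivity)
  have cur : ∀ {f : ℝ → ℝ → ℝ} (x : ℝ), Continuous (fun p : ℝ × ℝ => f p.1 p.2) →
      Continuous (f x) := fun x h => h.comp (by fun_prop : Continuous fun y : ℝ => (x, y))
  have A2 : ∀ x : ℝ, √(1 + x ^ 2) ^ 2 = 1 + x ^ 2 := fun x => Real.sq_sqrt (by positivity)
  have Ap : ∀ x : ℝ, 0 < √(1 + x ^ 2) := fun x => Real.sqrt_pos.2 (by positivity)
  have HI : ∀ x, _ := fun x => inner_ineq (Ap x) hr (cur x cU) (cur x cUy) (dy x)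
    (fun y hy => sU x y (Or.inr hy)) (fun y hy => sUy x y (Or.inr hy)) _ _ rfl rfl
  have HK : ∀ x k, _ := fun x k => kineq (x := x) (k := k) (Ap x) hr (cur x cU) (cur x cUx)
    (fun y hy => sU x y (Or.inr hy)) (fun y hy => sUx x y (Or.inr hy)) _ _ rfl rfl
  simp only [A2] at HI HK
  refine outer hr (φ := fun x => (∫ y in (-r)..r, (Real.exp (U x y / 2) - 1) *
      (1 + x ^ 2 + y ^ 2)⁻¹) + π / √(1 + x ^ 2))
    (φ' := fun x => (∫ y in (-r)..r, (Real.exp (U x y / 2) * (Ux x y / 2) * (1 + x ^ 2 + y ^ 2)⁻¹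
      - (Real.exp (U x y / 2) - 1) * (2 * x * ((1 + x ^ 2 + y ^ 2) ^ 2)⁻¹)))
      - π * x / √(1 + x ^ 2) ^ 3) ?_ ?_ ?_ ?_ ?_ ?_ ?_ ?_ ?_
  · apply intervalIntegral.continuous_parametric_intervalIntegral_of_continuous'
    exact ((Real.continuous_exp.comp cU).sub continuous_const).mul cD2
  · intro x hx; simp [sU x _ (Or.inl hx)]
  · intro x hx; simp [sU x _ (Or.inl hx)]
  · intro x
    have h1 := param_deriv (f := fun x y => (Real.exp (U x y / 2) - 1) * (1 + x ^ 2 + y ^ 2)⁻¹)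
      (f' := fun x y => (Real.exp (U x y / 2) * (Ux x y / 2) * (1 + x ^ 2 + y ^ 2)⁻¹
      - (Real.exp (U x y / 2) - 1) * (2 * x * ((1 + x ^ 2 + y ^ 2) ^ 2)⁻¹)))
      (by simp only [Function.uncurry_def]; fun_prop) (by simp only [Function.uncurry_def]; fun_prop)
      (by
        intro x y
        have e1 : HasDerivAt (fun x : ℝ => 1 + x ^ 2 + y ^ 2) (2 * x) x := by
          simpa using ((hasDerivAt_pow 2 x).const_add 1).add_const (y ^ 2)
        have hD : 1 + x ^ 2 + y ^ 2 ≠ 0 := by positivity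
        refine ((((dx x y).div_const 2).exp.sub_const 1).mul (e1.fun_inv hD)).congr_deriv ?_
        field_simp
        ring) (-r) r x
    have h2 : HasDerivAt (fun x : ℝ => π / √(1 + x ^ 2)) (- (π * x / √(1 + x ^ 2) ^ 3)) x := by
      refine ((hasDerivAt_const x π).div (hasDerivAt_sqrt1 x) (Ap x).ne').congr_deriv ?_
      have := Ap x
      field_simp
      ring
    refine (h1.add h2).congr_deriv ?_
    ring
  · intro x; exact (HI x).1
  · apply intervalIntegral.continuous_parametric_intervalIntegral_of_continuous'
    simp only [Function.uncurry_def]; fun_prop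
  · intro x hx; simp [sUx x _ (Or.inl hx), sUy x _ (Or.inl hx)]
  · intro x; exact (HK x 0).1
  · intro x k
    have h1 := (HI x).2
    have h2 := (HK x k).2
    have cx := cur (f := fun x y => Ux x y ^ 2 / 4 - 2 * x * Ux x y * (1 + x ^ 2 + y ^ 2)⁻¹) x
      (by fun_prop)
    have cy := cur (f := fun x y => Uy x y ^ 2 / 4 - 2 * y * Uy x y * (1 + x ^ 2 + y ^ 2)⁻¹) x
      (by fun_prop)
    rw [intervalIntegral.integral_add (cx.intervalIntegrable _ _) (cy.intervalIntegrable _ _)]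
    have e : 4 * π / √(1 + x ^ 2) - 2 * π / √(1 + x ^ 2) ^ 3 =
        2 * π / √(1 + x ^ 2) + 2 * π * x ^ 2 / √(1 + x ^ 2) ^ 3 := by
      have := Ap x
      have h3 : x ^ 2 = √(1 + x ^ 2) ^ 2 - 1 := by rw [A2]; ring
      generalize √(1 + x ^ 2) = A at *
      rw [h3]
      field_simp
      ring
    rw [e]
    linarith

/-- integration by parts against `x / D` on an interval -/
lemma ibp1 {r a : ℝ} {v v' : ℝ → ℝ} (hv' : Continuous v')
    (hd : ∀ x, HasDerivAt v (v' x) x) (h1 : v r = 0) (h2 : v (-r) = 0) :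
    (∫ x in (-r)..r, x * (1 + a ^ 2 + x ^ 2)⁻¹ * v' x) =
      ∫ x in (-r)..r, -(((1 + a ^ 2 + x ^ 2)⁻¹ - 2 * x ^ 2 * ((1 + a ^ 2 + x ^ 2) ^ 2)⁻¹) * v x) := by
  have hD : ∀ x : ℝ, 1 + a ^ 2 + x ^ 2 ≠ 0 := fun y => by positivity
  have cD : Continuous fun x : ℝ => (1 + a ^ 2 + x ^ 2)⁻¹ := Continuous.inv₀ (by fun_prop) hD
  have cD2 : Continuous fun x : ℝ => ((1 + a ^ 2 + x ^ 2) ^ 2)⁻¹ :=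
    Continuous.inv₀ (by fun_prop) (fun y => by positivity)
  have d1 : ∀ x : ℝ, HasDerivAt (fun x : ℝ => x * (1 + a ^ 2 + x ^ 2)⁻¹)
     ((1 + a ^ 2 + x ^ 2)⁻¹ - 2 * x ^ 2 * ((1 + a ^ 2 + x ^ 2) ^ 2)⁻¹) x := by
    intro x
    have e1 : HasDerivAt (fun x : ℝ => 1 + a ^ 2 + x ^ 2) (2 * x) x := by
      simpa using (hasDerivAt_pow 2 x).const_add (1 + a ^ 2)
    refine ((hasDerivAt_id x).mul (e1.fun_inv (hD x))).congr_deriv ?_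
    simp only [id]
    have := hD x
    field_simp
    ring
  rw [intervalIntegral.integral_mul_deriv_eq_deriv_mul (fun x _ => d1 x) (fun x _ => hd x)
    (Continuous.intervalIntegrable (by fun_prop) _ _) (hv'.intervalIntegrable _ _), h1, h2]
  rw [intervalIntegral.integral_neg]
  ring

lemma rhs_eq {r : ℝ} (hr : 0 < r) {U Ux Uy : ℝ → ℝ → ℝ}
    (cU : Continuous (fun p : ℝ × ℝ => U p.1 p.2)) (cUx : Continuous (fun p : ℝ × ℝ => Ux p.1 p.2))
    (cUy : Continuous (fun p : ℝ × ℝ => Uy p.1 p.2))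
    (dx : ∀ x y, HasDerivAt (fun s => U s y) (Ux x y) x)
    (dy : ∀ x y, HasDerivAt (fun s => U x s) (Uy x y) y)
    (sU : ∀ x y, r ≤ |x| ∨ r ≤ |y| → U x y = 0) :
    (∫ x in (-r)..r, ∫ y in (-r)..r,
      ((Ux x y ^ 2 / 4 - 2 * x * Ux x y * (1 + x ^ 2 + y ^ 2)⁻¹) +
       (Uy x y ^ 2 / 4 - 2 * y * Uy x y * (1 + x ^ 2 + y ^ 2)⁻¹))) =
    (1 / 4) * (∫ x in (-r)..r, ∫ y in (-r)..r, (Ux x y ^ 2 + Uy x y ^ 2)) +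
    4 * ∫ x in (-r)..r, ∫ y in (-r)..r, ((1 + x ^ 2 + y ^ 2) ^ 2)⁻¹ * U x y := by
  have cD : Continuous (fun p : ℝ × ℝ => (1 + p.1 ^ 2 + p.2 ^ 2)⁻¹) :=
    Continuous.inv₀ (by fun_prop) (fun p => by positivity)
  have cD2 : Continuous (fun p : ℝ × ℝ => ((1 + p.1 ^ 2 + p.2 ^ 2) ^ 2)⁻¹) :=
    Continuous.inv₀ (by fun_prop) (fun p => by positivity)
  have cur : ∀ {f : ℝ → ℝ → ℝ} (x : ℝ), Continuous (fun p : ℝ × ℝ => f p.1 p.2) →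
      Continuous (f x) := fun x h => h.comp (by fun_prop : Continuous fun y : ℝ => (x, y))
  have cul : ∀ {f : ℝ → ℝ → ℝ} (y : ℝ), Continuous (fun p : ℝ × ℝ => f p.1 p.2) →
      Continuous (fun x => f x y) :=
    fun y h => h.comp (by fun_prop : Continuous fun x : ℝ => (x, y))
  have add2 : ∀ {f g : ℝ → ℝ → ℝ}, Continuous (fun p : ℝ × ℝ => f p.1 p.2) →
      Continuous (fun p : ℝ × ℝ => g p.1 p.2) →
      (∫ x in (-r)..r, ∫ y in (-r)..r, (f x y + g x y)) =
      (∫ x in (-r)..r, ∫ y in (-r)..r, f x y) + ∫ x in (-r)..r, ∫ y in (-r)..r, g x y := by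
    intro f g hf hg
    rw [← intervalIntegral.integral_add]
    · congr 1; ext x
      rw [intervalIntegral.integral_add ((cur x hf).intervalIntegrable _ _)
        ((cur x hg).intervalIntegrable _ _)]
    · exact (intervalIntegral.continuous_parametric_intervalIntegral_of_continuous' hf _ _
        ).intervalIntegrable _ _
    · exact (intervalIntegral.continuous_parametric_intervalIntegral_of_continuous' hg _ _
        ).intervalIntegrable _ _
  have mul2 : ∀ (c : ℝ) (f : ℝ → ℝ → ℝ), 
      (∫ x in (-r)..r, ∫ y in (-r)..r, c * f x y) = c * ∫ x in (-r)..r, ∫ y in (-r)..r, f x y := by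
    intro c f
    simp_rw [intervalIntegral.integral_const_mul]
  have swap : ∀ {f : ℝ → ℝ → ℝ}, Continuous (fun p : ℝ × ℝ => f p.1 p.2) →
      (∫ x in (-r)..r, ∫ y in (-r)..r, f x y) = ∫ y in (-r)..r, ∫ x in (-r)..r, f x y := by
    intro f hf
    simp only [intervalIntegral.integral_of_le (show -r ≤ r by linarith)]
    refine integral_integral_swap ?_
    rw [Measure.prod_restrict]
    exact (hf.continuousOn.integrableOn_compact ((isCompact_Icc (a := -r) (b := r)).prod
      (isCompact_Icc (a := -r) (b := r)))).mono_set
      (Set.prod_mono Ioc_subset_Icc_self Ioc_subset_Icc_self)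
  have ar : r ≤ |r| := le_abs_self r
  have ar' : r ≤ |-r| := by rw [abs_neg]; exact ar
  have X : (∫ x in (-r)..r, ∫ y in (-r)..r, x * (1 + x ^ 2 + y ^ 2)⁻¹ * Ux x y) =
      ∫ x in (-r)..r, ∫ y in (-r)..r,
        -(((1 + x ^ 2 + y ^ 2)⁻¹ - 2 * x ^ 2 * ((1 + x ^ 2 + y ^ 2) ^ 2)⁻¹) * U x y) := by
    rw [swap (f := fun x y => x * (1 + x ^ 2 + y ^ 2)⁻¹ * Ux x y) (by fun_prop),
      swap (f := fun x y => -(((1 + x ^ 2 + y ^ 2)⁻¹ - 2 * x ^ 2 * ((1 + x ^ 2 + y ^ 2) ^ 2)⁻¹) * U x y))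
      (by fun_prop)]
    congr 1; ext y
    have := ibp1 (a := y) (cul y cUx) (fun x => dx x y) (sU r y (Or.inl ar))
      (sU (-r) y (Or.inl ar'))
    simp_rw [add_right_comm 1 (y ^ 2)] at this
    exact this
  have Y : (∫ x in (-r)..r, ∫ y in (-r)..r, y * (1 + x ^ 2 + y ^ 2)⁻¹ * Uy x y) =
      ∫ x in (-r)..r, ∫ y in (-r)..r,
        -(((1 + x ^ 2 + y ^ 2)⁻¹ - 2 * y ^ 2 * ((1 + x ^ 2 + y ^ 2) ^ 2)⁻¹) * U x y) := by
    congr 1; ext x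
    exact ibp1 (a := x) (cur x cUy) (fun y => dy x y) (sU x r (Or.inr ar))
      (sU x (-r) (Or.inr ar'))
  have e1 : (∫ x in (-r)..r, ∫ y in (-r)..r,
      ((Ux x y ^ 2 / 4 - 2 * x * Ux x y * (1 + x ^ 2 + y ^ 2)⁻¹) +
       (Uy x y ^ 2 / 4 - 2 * y * Uy x y * (1 + x ^ 2 + y ^ 2)⁻¹))) =
     ∫ x in (-r)..r, ∫ y in (-r)..r, ((1 / 4) * (Ux x y ^ 2 + Uy x y ^ 2) +
      ((-2) * (x * (1 + x ^ 2 + y ^ 2)⁻¹ * Ux x y) + (-2) * (y * (1 + x ^ 2 + y ^ 2)⁻¹ * Uy x y))) := by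
    congr 1; ext x; congr 1; ext y; ring
  rw [e1, add2 (f := fun x y => (1 / 4) * (Ux x y ^ 2 + Uy x y ^ 2)) (by fun_prop) (by fun_prop),
    add2 (f := fun x y => (-2) * (x * (1 + x ^ 2 + y ^ 2)⁻¹ * Ux x y)) (by fun_prop) (by fun_prop),
    mul2 (1 / 4), mul2 (-2), mul2 (-2), X, Y, ← mul2 (-2), ← mul2 (-2), ← mul2 4, ← add2 (by fun_prop) (by fun_prop)]
  congr 1
  congr 1; ext x; congr 1; ext y
  have : 1 + x ^ 2 + y ^ 2 ≠ 0 := by positivity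
  field_simp
  ring

end Onofri

namespace Onofri
open Filter Topology Set

lemma pair_eq (p : EuclideanSpace ℝ (Fin 2)) : !₂[p 0, p 1] = p := by
  ext i; fin_cases i <;> simp

lemma continuous_pair : Continuous (fun p : ℝ × ℝ => !₂[p.1, p.2]) := by
  refine (PiLp.continuous_toLp 2 _).comp ?_
  refine continuous_pi fun i => ?_
  fin_cases i <;> simp <;> fun_prop

lemma mp_pair : MeasurePreserving (fun p : ℝ × ℝ => (!₂[p.1, p.2] : EuclideanSpace ℝ (Fin 2))) :=
  (PiLp.volume_preserving_toLp (Fin 2)).comp (volume_preserving_finTwoArrow ℝ).symm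

lemma integral_pair {r : ℝ} (hr : 0 < r) {f : EuclideanSpace ℝ (Fin 2) → ℝ} (hf : Continuous f)
    (h0 : ∀ x y, r ≤ |x| ∨ r ≤ |y| → f !₂[x, y] = 0) :
    ∫ p, f p = ∫ x in (-r)..r, ∫ y in (-r)..r, f !₂[x, y] := by
  have emb : MeasurableEmbedding (fun p : ℝ × ℝ => (!₂[p.1, p.2] : EuclideanSpace ℝ (Fin 2))) :=
    ((MeasurableEquiv.toLp 2 _).measurableEmbedding).comp
      (MeasurableEquiv.finTwoArrow (α := ℝ)).symm.measurableEmbedding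
  rw [← mp_pair.integral_comp emb]
  have hc : Continuous fun p : ℝ × ℝ => f !₂[p.1, p.2] := hf.comp continuous_pair
  simp only [intervalIntegral.integral_of_le (show -r ≤ r by linarith)]
  rw [← setIntegral_eq_integral_of_forall_compl_eq_zero (s := Ioc (-r) r ×ˢ Ioc (-r) r)]
  · rw [Measure.volume_eq_prod]
    refine setIntegral_prod (fun p : ℝ × ℝ => f !₂[p.1, p.2]) ?_
    exact (hc.continuousOn.integrableOn_compact ((isCompact_Icc (a := -r) (b := r)).prod
      (isCompact_Icc (a := -r) (b := r)))).mono_set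
      (Set.prod_mono Ioc_subset_Icc_self Ioc_subset_Icc_self)
  · intro p hp
    apply h0
    by_contra! h
    rw [abs_lt, abs_lt] at h
    exact hp ⟨⟨h.1.1, h.1.2.le⟩, ⟨h.2.1, h.2.2.le⟩⟩

lemma integral_dens : ∫ x : EuclideanSpace ℝ (Fin 2), ((1 + ‖x‖ ^ 2) ^ 2)⁻¹ = π := by
  have h := integral_fun_norm_addHaar (volume : Measure (EuclideanSpace ℝ (Fin 2)))
    (fun t : ℝ => ((1 + t ^ 2) ^ 2)⁻¹)
  rw [h]
  have h2 : ∫ y in Ioi (0 : ℝ), y * ((1 + y ^ 2) ^ 2)⁻¹ = 0 - (-(1 / 2) * (1 + (0:ℝ) ^ 2)⁻¹) := by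
    refine integral_Ioi_of_hasDerivAt_of_nonneg' (g := fun y : ℝ => -(1 / 2) * (1 + y ^ 2)⁻¹) ?_ ?_ ?_
    · intro y _
      have e1 : HasDerivAt (fun x : ℝ => 1 + x ^ 2) (2 * y) y := by
        simpa using (hasDerivAt_pow 2 y).const_add 1
      have hD : 1 + y ^ 2 ≠ 0 := by positivity
      refine ((e1.fun_inv hD).const_mul (-(1 / 2))).congr_deriv ?_
      field_simp
    · intro y hy
      have : (0:ℝ) < y := hy
      positivity
    · have : Tendsto (fun y : ℝ => 1 + y ^ 2) atTop atTop :=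
        tendsto_atTop_add_const_left _ _ (tendsto_pow_atTop (by norm_num))
      simpa using (this.inv_tendsto_atTop).const_mul (-(1 / 2) : ℝ)
  have h3 : (volume : Measure (EuclideanSpace ℝ (Fin 2))).real (Metric.ball 0 1) = π := by
    rw [Measure.real, EuclideanSpace.volume_ball_fin_two]
    simp [Real.pi_pos.le]
  rw [h3]
  simp only [finrank_euclideanSpace, Fintype.card_fin, smul_eq_mul, nsmul_eq_mul]
  norm_num at h2 ⊢
  rw [h2]
  ring

lemma integral_sph (g : EuclideanSpace ℝ (Fin 2) → ℝ) :
    ∫ x, g x ∂sphMeasure = π⁻¹ * ∫ x, ((1 + ‖x‖ ^ 2) ^ 2)⁻¹ * g x := by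
  unfold sphMeasure
  rw [integral_withDensity_eq_integral_toReal_smul (by fun_prop) (ae_of_all _ fun _ => by simp),
    ← integral_const_mul]
  congr 1
  ext x
  rw [ENNReal.toReal_ofReal (by positivity), smul_eq_mul, mul_assoc]

end Onofri

/-- The Moser–Onofri inequality on `ℝ²` (the Euclidean form of Beckner's sharp
inequality in the critical case `n = 2k = 2`):
`log ∫ e^u dμ ≤ ∫ u dμ + (1/(16π)) ∫ |∇u|² dx`. -/
theorem moser_onofri
    (u : EuclideanSpace ℝ (Fin 2) → ℝ)
    (hu : ContDiff ℝ (⊤ : ℕ∞) u) (hc : HasCompactSupport u) :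
    Real.log (∫ x, Real.exp (u x) ∂sphMeasure)
      ≤ (∫ x, u x ∂sphMeasure)
        + (1 / (16 * π))
            * ∫ x, ∑ i, (fderiv ℝ u x (EuclideanSpace.single i 1)) ^ 2 := by
  obtain ⟨R, hR⟩ := hc.isCompact.isBounded.exists_norm_le
  obtain ⟨r, hr, hRr⟩ : ∃ r : ℝ, 0 < r ∧ R < r := ⟨max R 0 + 1, by positivity, by
    have := le_max_left R 0; linarith⟩
  have nsq : ∀ x y : ℝ, ‖(!₂[x, y] : EuclideanSpace ℝ (Fin 2))‖ ^ 2 = x ^ 2 + y ^ 2 := by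
    intro x y
    simp [EuclideanSpace.norm_sq_eq]
  have off : ∀ x y : ℝ, r ≤ |x| ∨ r ≤ |y| → (!₂[x, y] : EuclideanSpace ℝ (Fin 2)) ∉ tsupport u := by
    intro x y h hmem
    have h1 := hR _ hmem
    have h2 : ‖(!₂[x, y] : EuclideanSpace ℝ (Fin 2))‖ ^ 2 < r ^ 2 :=
      pow_lt_pow_left₀ (h1.trans_lt hRr) (norm_nonneg _) two_ne_zero
    rw [nsq] at h2
    rcases h with h | h
    · have : r ^ 2 ≤ |x| ^ 2 := pow_le_pow_left₀ hr.le h 2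
      rw [sq_abs] at this
      nlinarith [sq_nonneg y]
    · have : r ^ 2 ≤ |y| ^ 2 := pow_le_pow_left₀ hr.le h 2
      rw [sq_abs] at this
      nlinarith [sq_nonneg x]
  have su : ∀ x y : ℝ, r ≤ |x| ∨ r ≤ |y| → u !₂[x, y] = 0 := fun x y h =>
    image_eq_zero_of_notMem_tsupport (off x y h)
  have sdu : ∀ x y : ℝ, r ≤ |x| ∨ r ≤ |y| → fderiv ℝ u !₂[x, y] = 0 := fun x y h => by
    by_contra h'
    exact off x y h (support_fderiv_subset ℝ h')
  have cu : Continuous u := hu.continuous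
  have cdu : Continuous (fderiv ℝ u) := hu.continuous_fderiv (by simp)
  have cdi : ∀ i : Fin 2, Continuous fun p => fderiv ℝ u p (EuclideanSpace.single i 1) :=
    fun i => cdu.clm_apply continuous_const
  have hd : ∀ p, HasFDerivAt u (fderiv ℝ u p) p := fun p =>
    (hu.differentiable (by simp) p).hasFDerivAt
  have dx : ∀ x y : ℝ, HasDerivAt (fun s => u !₂[s, y])
      (fderiv ℝ u !₂[x, y] (EuclideanSpace.single 0 1)) x := by
    intro x y
    refine (hd !₂[x, y]).comp_hasDerivAt x (f := fun s : ℝ => !₂[s, y]) ?_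
    have e : (fun s : ℝ => (!₂[s, y] : EuclideanSpace ℝ (Fin 2))) =
        fun s => s • EuclideanSpace.single 0 1 + !₂[0, y] := by
      ext s i; fin_cases i <;> simp
    rw [e]
    simpa using ((hasDerivAt_id x).smul_const
      (EuclideanSpace.single 0 1 : EuclideanSpace ℝ (Fin 2))).add_const !₂[0, y]
  have dy : ∀ x y : ℝ, HasDerivAt (fun s => u !₂[x, s])
      (fderiv ℝ u !₂[x, y] (EuclideanSpace.single 1 1)) y := by
    intro x y
    refine (hd !₂[x, y]).comp_hasDerivAt y (f := fun s : ℝ => !₂[x, s]) ?_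
    have e : (fun s : ℝ => (!₂[x, s] : EuclideanSpace ℝ (Fin 2))) =
        fun s => s • EuclideanSpace.single 1 1 + !₂[x, 0] := by
      ext s i; fin_cases i <;> simp
    rw [e]
    simpa using ((hasDerivAt_id y).smul_const
      (EuclideanSpace.single 1 1 : EuclideanSpace ℝ (Fin 2))).add_const !₂[x, 0]
  have cU := cu.comp Onofri.continuous_pair
  have cUx := (cdi 0).comp Onofri.continuous_pair
  have cUy := (cdi 1).comp Onofri.continuous_pair
  obtain ⟨hpos, hcore⟩ := Onofri.core hr (U := fun x y => u !₂[x, y])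
    (Ux := fun x y => fderiv ℝ u !₂[x, y] (EuclideanSpace.single 0 1))
    (Uy := fun x y => fderiv ℝ u !₂[x, y] (EuclideanSpace.single 1 1)) cU cUx cUy dx dy su
    (fun x y h => by simp [sdu x y h]) (fun x y h => by simp [sdu x y h])
  rw [Onofri.rhs_eq hr (U := fun x y => u !₂[x, y])
    (Ux := fun x y => fderiv ℝ u !₂[x, y] (EuclideanSpace.single 0 1))
    (Uy := fun x y => fderiv ℝ u !₂[x, y] (EuclideanSpace.single 1 1)) cU cUx cUy dx dy su] at hcore
  have cw : Continuous fun p : EuclideanSpace ℝ (Fin 2) => ((1 + ‖p‖ ^ 2) ^ 2)⁻¹ :=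
    Continuous.inv₀ (by fun_prop) (fun p => by positivity)
  have I1 : (∫ p : EuclideanSpace ℝ (Fin 2), (Real.exp (u p) - 1) * ((1 + ‖p‖ ^ 2) ^ 2)⁻¹) =
      ∫ x in (-r)..r, ∫ y in (-r)..r, (Real.exp (u !₂[x, y]) - 1) * ((1 + x ^ 2 + y ^ 2) ^ 2)⁻¹ := by
    rw [Onofri.integral_pair hr (by fun_prop) (fun x y h => by simp [su x y h])]
    simp_rw [nsq, ← add_assoc]
  have I2 : (∫ p : EuclideanSpace ℝ (Fin 2), ((1 + ‖p‖ ^ 2) ^ 2)⁻¹ * u p) =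
      ∫ x in (-r)..r, ∫ y in (-r)..r, ((1 + x ^ 2 + y ^ 2) ^ 2)⁻¹ * u !₂[x, y] := by
    rw [Onofri.integral_pair hr (by fun_prop) (fun x y h => by simp [su x y h])]
    simp_rw [nsq, ← add_assoc]
  have I3 : (∫ p, ∑ i, (fderiv ℝ u p (EuclideanSpace.single i 1)) ^ 2) =
      ∫ x in (-r)..r, ∫ y in (-r)..r, ((fderiv ℝ u !₂[x, y] (EuclideanSpace.single 0 1)) ^ 2 +
        (fderiv ℝ u !₂[x, y] (EuclideanSpace.single 1 1)) ^ 2) := by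
    simp_rw [Fin.sum_univ_two]
    have c0 := cdi 0
    have c1 := cdi 1
    exact Onofri.integral_pair hr (by fun_prop) (fun x y h => by simp [sdu x y h])
  have wint : Integrable fun p : EuclideanSpace ℝ (Fin 2) => ((1 + ‖p‖ ^ 2) ^ 2)⁻¹ := by
    by_contra h
    have := integral_undef h
    rw [Onofri.integral_dens] at this
    exact Real.pi_ne_zero this
  have eint : Integrable fun p : EuclideanSpace ℝ (Fin 2) =>
      (Real.exp (u p) - 1) * ((1 + ‖p‖ ^ 2) ^ 2)⁻¹ := by
    refine Continuous.integrable_of_hasCompactSupport (by fun_prop) ?_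
    refine (hc.comp_left (g := fun t => Real.exp t - 1) (by simp)).mul_right
  have I4 : (∫ p, Real.exp (u p) ∂sphMeasure) = π⁻¹ * (π + ∫ x in (-r)..r, ∫ y in (-r)..r,
      (Real.exp (u !₂[x, y]) - 1) * ((1 + x ^ 2 + y ^ 2) ^ 2)⁻¹) := by
    rw [Onofri.integral_sph, ← I1]
    have hadd := integral_add wint eint
    rw [Onofri.integral_dens] at hadd
    rw [← hadd]
    congr 2
    ext p
    ring
  rw [I4, Real.log_mul (inv_ne_zero Real.pi_ne_zero) hpos.ne', Real.log_inv, Onofri.integral_sph, I2, I3]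
  have hpi := Real.pi_pos
  rw [← mul_le_mul_iff_right₀ (show 0 < 4 * π by positivity)]
  refine le_trans (le_of_eq ?_) (hcore.trans (le_of_eq ?_))
  · ring
  · field_simp
    ring
end
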